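/- arXiv:2605.01590 — 2 statements merged into one kernel-verified Lean document; each statement's English description precedes it below -/
import Mathlib

section
/- Let K = ℚ(√−2437) be the imaginary quadratic field of discriminant d = −9748. Then the 3-primary part of the ideal class group of the ring of integers of K (equivalently, its Sylow 3-subgroup) is isomorphic to (ℤ/3ℤ) × (ℤ/3ℤ); in particular, K has an elementary bicyclic 3-class group. -/
/-!
The ring `ℤ[√-2437]` is the ring of integers of `K`, and each of its ideal classes contains an ideal
`(n, x + √-2437)` whose associated binary quadratic form is reduced. Counting the reduced pairs
`(n, x)` shows that the class group has at most `19 < 3 ^ 3` elements, so its Sylow `3`-subgroup has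
order dividing `9`. Two subgroups of order `3` come from the norm equations
`121 ^ 2 + 2437 * 2 ^ 2 = 29 ^ 3` and `173 ^ 2 + 2437 * 4 ^ 2 = 41 ^ 3`: they make the classes of
prime ideals above `29` and `41` have cube `1`. The first class is nontrivial and the second is not
a power of it, because no element of the ring has norm `29`, `41`, `29 * 41` or `29 ^ 2 * 41`. An
abelian `3`-group of order at most `9` with two distinct subgroups of order `3` is `(ℤ/3ℤ) ^ 2`.
-/

open NumberField

/-! ### Sylow subgroups isomorphic to `(ℤ/pℤ)²` -/

theorem nonempty_linearEquiv_prod_of_natCard_eq_sq {F V : Type*} [Field F] [Finite F]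
    [AddCommGroup V] [Module F V] (hcard : Nat.card V = Nat.card F ^ 2) :
    Nonempty (V ≃ₗ[F] F × F) := by
  have : Finite V := Nat.finite_of_card_ne_zero (hcard ▸ pow_ne_zero 2 Nat.card_pos.ne')
  have hrank : Module.finrank F V = 2 :=
    Nat.pow_right_injective (Finite.one_lt_card (α := F)) <|
      Module.natCard_eq_pow_finrank.symm.trans hcard
  exact ⟨(Module.finBasisOfFinrankEq F V hrank).equivFun.trans (LinearEquiv.finTwoArrow F F)⟩

theorem nonempty_mulEquiv_zmod_prod_of_not_isCyclic {G : Type*} [Group G] {p : ℕ} (hp : p.Prime)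
    (hcard : Nat.card G = p ^ 2) (hcyc : ¬IsCyclic G) :
    Nonempty (G ≃* Multiplicative (ZMod p × ZMod p)) := by
  have hexp (g : G) : g ^ p = 1 :=
    (not_isCyclic_iff_exponent_eq_prime hp hcard).mp hcyc ▸ Monoid.pow_exponent_eq_one g
  have := Fact.mk hp
  let : CommGroup G := IsPGroup.commGroupOfCardEqPrimeSq hcard
  let : Module (ZMod p) (Additive G) := AddCommGroup.zmodModule fun g ↦ hexp g.toMul
  obtain ⟨φ⟩ := nonempty_linearEquiv_prod_of_natCard_eq_sq (F := ZMod p) (V := Additive G)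
    (by rw [Nat.card_zmod]; exact hcard)
  exact ⟨AddEquiv.toMultiplicativeRight φ.toAddEquiv⟩

theorem pow_eq_one_of_mem_zpowers {G : Type*} [Group G] {n : ℕ} {a g : G} (ha : a ^ n = 1)
    (hg : g ∈ Subgroup.zpowers a) : g ^ n = 1 := by
  obtain ⟨k, rfl⟩ := Subgroup.mem_zpowers_iff.mp hg
  rw [← zpow_natCast, zpow_comm, zpow_natCast, ha, one_zpow]

theorem not_isCyclic_of_notMem_zpowers {G : Type*} [Group G] [Finite G] {p : ℕ} (hp : p.Prime)
    {a b : G} (ha : a ^ p = 1) (hb : b ^ p = 1) (ha1 : a ≠ 1) (hab : b ∉ Subgroup.zpowers a) :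
    ¬IsCyclic G := by
  classical
  intro _
  have := Fact.mk hp
  have := Fintype.ofFinite G
  have hsub : insert b (Subgroup.zpowers a : Set G) ⊆ ({g | g ^ p = 1} : Finset G) :=
    Set.insert_subset (by simpa using hb) fun g hg ↦ by simpa using pow_eq_one_of_mem_zpowers ha hg
  have hcard : p + 1 ≤ p := calc
    p + 1 = (insert b (Subgroup.zpowers a : Set G)).ncard := by
      rw [Set.ncard_insert_of_notMem hab, ← Nat.card_coe_set_eq, SetLike.coe_sort_coe,
        Nat.card_zpowers, orderOf_eq_prime ha ha1]
    _ ≤ ({g | g ^ p = 1} : Finset G).card :=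
      (Set.ncard_le_ncard hsub).trans_eq (Set.ncard_coe_finset _)
    _ ≤ p := IsCyclic.card_pow_eq_one_le hp.pos
  exact hcard.not_gt p.lt_succ_self

theorem notMem_zpowers_of_pow_mul_ne_one {G : Type*} [Group G] {n : ℕ} {a b : G} (hn : 0 < n)
    (ha : a ^ n = 1) (h : ∀ k < n, a ^ k * b ≠ 1) : b ∉ Subgroup.zpowers a := by
  classical
  intro hb
  have hfin : IsOfFinOrder a := isOfFinOrder_iff_pow_eq_one.mpr ⟨n, hn, ha⟩
  obtain ⟨k, hk, hkb⟩ := Finset.mem_image.mp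
    (hfin.mem_zpowers_iff_mem_range_orderOf.mp (inv_mem hb))
  refine h k ((Finset.mem_range.mp hk).trans_le (orderOf_le_of_pow_eq_one hn ha)) ?_
  rw [hkb, inv_mul_cancel]

theorem sylow_nonempty_mulEquiv_zmod_prod {G : Type*} [CommGroup G] [Finite G] {p : ℕ}
    (hp : p.Prime) (hcard : Nat.card G < p ^ 3) {a b : G} (ha : a ^ p = 1) (hb : b ^ p = 1)
    (ha1 : a ≠ 1) (hab : b ∉ Subgroup.zpowers a) (P : Sylow p G) :
    Nonempty (P ≃* Multiplicative (ZMod p × ZMod p)) := by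
  have := Fact.mk hp
  have hmem {g : G} (hg : g ^ p = 1) : g ∈ P := by
    have : IsPGroup p (Subgroup.zpowers g) := fun x ↦
      ⟨1, Subtype.ext <| by simpa using pow_eq_one_of_mem_zpowers hg x.2⟩
    exact this.le_sylow_of_normal P (Subgroup.mem_zpowers g)
  have hcyc : ¬IsCyclic P :=
    not_isCyclic_of_notMem_zpowers hp (a := ⟨a, hmem ha⟩) (b := ⟨b, hmem hb⟩)
      (Subtype.ext ha) (Subtype.ext hb) (by simpa [Subtype.ext_iff] using ha1)
      (by simpa [Subgroup.mem_zpowers_iff, Subtype.ext_iff] using hab)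
  obtain ⟨k, hk⟩ := IsPGroup.iff_card.mp P.isPGroup'
  have hk3 : k < 3 := (Nat.pow_lt_pow_iff_right hp.one_lt).mp <|
    hk ▸ (Subgroup.card_le_card_group P.toSubgroup).trans_lt hcard
  have hk2 : k = 2 := by
    interval_cases k
    · have : Subsingleton P := (Nat.card_eq_one_iff_unique.mp (by simpa using hk)).1
      exact absurd isCyclic_of_subsingleton hcyc
    · exact absurd (isCyclic_of_prime_card (by simpa using hk)) hcyc
    · rfl
  exact nonempty_mulEquiv_zmod_prod_of_not_isCyclic hp (hk2 ▸ hk) hcyc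

/-! ### The ring of integers of a quadratic field -/

theorem not_isSquare_of_squarefree_of_ne_one {d : ℤ} (hd : Squarefree d) (hd1 : d ≠ 1) :
    ¬IsSquare d := by
  rintro ⟨n, rfl⟩
  exact hd1 (Int.isUnit_mul_self (hd n dvd_rfl))

section Integrality

variable {R : Type*} [CommRing R] {a b : R}

theorem isIntegral_quadraticAlgebra_star {z : QuadraticAlgebra R a b} (hz : IsIntegral ℤ z) :
    IsIntegral ℤ (star z) :=
  hz.map (starRingEnd (QuadraticAlgebra R a b)).toIntAlgHom

theorem isIntegral_quadraticAlgebra_trace {z : QuadraticAlgebra R a b} (hz : IsIntegral ℤ z) :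
    IsIntegral ℤ z.trace := by
  rw [← isIntegral_algebraMap_iff (B := QuadraticAlgebra R a b)
    QuadraticAlgebra.algebraMap_injective, QuadraticAlgebra.algebraMap_trace_eq_add_star]
  exact hz.add (isIntegral_quadraticAlgebra_star hz)

theorem isIntegral_quadraticAlgebra_norm {z : QuadraticAlgebra R a b} (hz : IsIntegral ℤ z) :
    IsIntegral ℤ z.norm := by
  rw [← isIntegral_algebraMap_iff (B := QuadraticAlgebra R a b)
    QuadraticAlgebra.algebraMap_injective, QuadraticAlgebra.algebraMap_norm_eq_mul_star]
  exact hz.mul (isIntegral_quadraticAlgebra_star hz)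

end Integrality

theorem exists_intCast_of_squarefree_mul_sq {d k : ℤ} (hd : Squarefree d) {r : ℚ}
    (h : d * r ^ 2 = k) : ∃ n : ℤ, (n : ℚ) = r := by
  have hd0 : (d : ℚ) ≠ 0 := mod_cast hd.ne_zero
  obtain ⟨j, hj⟩ : ∃ j : ℤ, (j : ℚ) = d * r := by
    refine IsIntegrallyClosed.algebraMap_eq_of_integral (K := ℚ)
      (.of_pow two_pos (?_ : IsIntegral ℤ ((d * r : ℚ) ^ 2)))
    rw [show (d * r : ℚ) ^ 2 = ((d * k : ℤ) : ℚ) by push_cast; rw [← h]; ring]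
    exact isIntegral_algebraMap
  have hdj : d ∣ j := by
    rw [← hd.dvd_pow_iff_dvd two_ne_zero]
    refine ⟨k, mod_cast (?_ : (j : ℚ) ^ 2 = d * k)⟩
    rw [hj, ← h]
    ring
  obtain ⟨n, rfl⟩ := hdj
  refine ⟨n, mul_left_cancel₀ hd0 ?_⟩
  rw [← hj]
  push_cast
  rfl

theorem even_and_even_of_sq_eq_mul_sq_add_four_mul {d t s m : ℤ} (hd0 : d % 4 ≠ 0)
    (hd1 : d % 4 ≠ 1) (h : t ^ 2 = d * s ^ 2 + 4 * m) : Even t ∧ Even s := by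
  rcases Int.even_or_odd' t with ⟨k, rfl | rfl⟩ <;>
    rcases Int.even_or_odd' s with ⟨l, rfl | rfl⟩ <;> ring_nf at h
  · exact ⟨even_two_mul k, even_two_mul l⟩
  all_goals lia

theorem exists_intCast_of_trace_norm {d t m : ℤ} (hd : Squarefree d) (hd1 : d % 4 ≠ 1) {p q : ℚ}
    (htrace : 2 * p = t) (hnorm : p ^ 2 - d * q ^ 2 = m) :
    (∃ x : ℤ, (x : ℚ) = p) ∧ ∃ y : ℤ, (y : ℚ) = q := by
  have hd0 : d % 4 ≠ 0 := fun h ↦ by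
    have := Int.isUnit_iff.mp (hd 2 (by lia))
    lia
  obtain ⟨s, hs⟩ := exists_intCast_of_squarefree_mul_sq (k := t ^ 2 - 4 * m) hd (r := 2 * q)
    (by push_cast; rw [← htrace, ← hnorm]; ring)
  have hts : (t : ℚ) ^ 2 = d * s ^ 2 + 4 * m := by rw [← htrace, ← hnorm, hs]; ring
  obtain ⟨⟨x, rfl⟩, ⟨y, rfl⟩⟩ :=
    even_and_even_of_sq_eq_mul_sq_add_four_mul hd0 hd1 (mod_cast hts)
  push_cast at htrace hs
  exact ⟨⟨x, by linarith⟩, ⟨y, by linarith⟩⟩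

theorem quadraticAlgebra_lift_bijective {K : Type*} [Field K] [Algebra ℚ K]
    (hdeg : Module.finrank ℚ K = 2) {d : ℤ} (hd : ¬IsSquare d)
    (u : {u : K // u * u = (d : ℚ) • 1 + (0 : ℚ) • u}) :
    Function.Bijective (QuadraticAlgebra.lift u) := by
  have : Fact (∀ r : ℚ, r ^ 2 ≠ d + 0 * r) := ⟨fun r hr ↦
    hd (Rat.isSquare_intCast_iff.mp ⟨r, by rw [← sq, hr]; ring⟩)⟩
  have : FiniteDimensional ℚ K := .of_finrank_pos (by lia)
  have hinj : Function.Injective (QuadraticAlgebra.lift u) := RingHom.injective _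
  exact ⟨hinj, (LinearMap.injective_iff_surjective_of_finrank_eq_finrank
    (f := (QuadraticAlgebra.lift u).toLinearMap)
    ((QuadraticAlgebra.finrank_eq_two (R := ℚ) _ _).trans hdeg.symm)).mp hinj⟩

theorem zsqrtd_isIntegralClosure {K : Type*} [Field K] [CharZero K]
    (hdeg : Module.finrank ℚ K = 2) {d : ℤ} (hd : Squarefree d) (hd1 : d % 4 ≠ 1)
    [Algebra (ℤ√d) K] : IsIntegralClosure (ℤ√d) ℤ K := by
  have hsq := not_isSquare_of_squarefree_of_ne_one hd (by lia)
  let w : K := algebraMap (ℤ√d) K Zsqrtd.sqrtd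
  have hw : w * w = d := by
    rw [← map_mul, Zsqrtd.dmuld, map_intCast]
  have halg (x y : ℤ) : algebraMap (ℤ√d) K ⟨x, y⟩ = x + w * y := by
    rw [Zsqrtd.decompose, map_add, map_mul, map_intCast, map_intCast]
  let φ := QuadraticAlgebra.lift (R := ℚ) (a := d) (b := 0) ⟨w, by simp [hw, Algebra.smul_def]⟩
  have hφ : Function.Bijective φ := quadraticAlgebra_lift_bijective hdeg hsq _
  refine ⟨?_, fun {z} ↦ ⟨fun hz ↦ ?_, ?_⟩⟩
  · rw [← Zsqrtd.lift.apply_symm_apply (algebraMap (ℤ√d) K)]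
    exact Zsqrtd.lift_injective _ fun n hn ↦ hsq ⟨n, hn⟩
  · obtain ⟨z, rfl⟩ := hφ.2 z
    have hz : IsIntegral ℤ z := (isIntegral_algHom_iff (φ.restrictScalars ℤ) hφ.1).mp hz
    obtain ⟨t, ht⟩ := IsIntegrallyClosed.isIntegral_iff.mp (isIntegral_quadraticAlgebra_trace hz)
    obtain ⟨m, hm⟩ := IsIntegrallyClosed.isIntegral_iff.mp (isIntegral_quadraticAlgebra_norm hz)
    obtain ⟨⟨x, hx⟩, y, hy⟩ :=
      exists_intCast_of_trace_norm (t := t) (m := m) (p := z.re) (q := z.im) hd hd1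
        (by simpa [QuadraticAlgebra.trace_def] using ht.symm)
        (by rw [eq_intCast, QuadraticAlgebra.norm_def] at hm; linear_combination -hm)
    refine ⟨⟨x, y⟩, ?_⟩
    simp [halg, φ, ← hx, ← hy, Algebra.smul_def, mul_comm]
  · rintro ⟨⟨x, y⟩, rfl⟩
    have hw_int : IsIntegral ℤ w := .of_pow two_pos (by rw [sq, hw]; exact isIntegral_algebraMap)
    rw [halg]
    exact isIntegral_algebraMap.add (hw_int.mul isIntegral_algebraMap)

/-! ### Ideals attached to quadratic forms -/

/-- The ideal `(n, x + √d)` of `ℤ[√d]`. When `n ∣ x ^ 2 - d` it corresponds to the binary quadratic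
form with coefficients `n`, `2 * x`, `(x ^ 2 - d) / n`, and `n` is its norm up to sign. -/
def quadIdeal (d n x : ℤ) : Ideal (ℤ√d) :=
  Ideal.span {(n : ℤ√d), ⟨x, 1⟩}

namespace quadIdeal

variable {d n m x y : ℤ}

theorem intCast_mem : (n : ℤ√d) ∈ quadIdeal d n x := Ideal.subset_span (by simp)

theorem mk_one_mem : (⟨x, 1⟩ : ℤ√d) ∈ quadIdeal d n x := Ideal.subset_span (by simp)

theorem mem_iff (h : n ∣ x ^ 2 - d) {z : ℤ√d} :
    z ∈ quadIdeal d n x ↔ n ∣ z.re - x * z.im := by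
  obtain ⟨m, hm⟩ := h
  rw [quadIdeal, Ideal.mem_span_pair]
  constructor
  · rintro ⟨u, v, rfl⟩
    refine ⟨u.re - x * u.im - v.im * m, ?_⟩
    simp only [Zsqrtd.re_add, Zsqrtd.re_mul, Zsqrtd.im_add, Zsqrtd.im_mul, Zsqrtd.re_intCast,
      Zsqrtd.im_intCast]
    linear_combination -v.im * hm
  · rintro ⟨k, hk⟩
    refine ⟨k, z.im, ?_⟩
    ext <;> simp only [Zsqrtd.re_add, Zsqrtd.re_mul, Zsqrtd.im_add, Zsqrtd.im_mul,
      Zsqrtd.re_intCast, Zsqrtd.im_intCast]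
    · linear_combination -hk
    · ring

theorem mul_eq (h2x : IsCoprime n (2 * x)) (h : n * m ∣ x ^ 2 - d) :
    quadIdeal d n x * quadIdeal d m x = quadIdeal d (n * m) x := by
  obtain ⟨k, hk⟩ := h
  apply le_antisymm
  · rw [quadIdeal, quadIdeal, Ideal.span_pair_mul_span_pair, Ideal.span_le]
    simp only [Set.insert_subset_iff, Set.singleton_subset_iff, SetLike.mem_coe,
      mem_iff (Dvd.intro k hk.symm)]
    refine ⟨by simp, by simp [mul_comm], by simp [mul_comm], -k, ?_⟩
    simp only [Zsqrtd.re_mul, Zsqrtd.im_mul]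
    linear_combination -hk
  · rw [quadIdeal, Ideal.span_le, Set.insert_subset_iff, Set.singleton_subset_iff]
    refine ⟨by simpa using Ideal.mul_mem_mul intCast_mem intCast_mem, ?_⟩
    obtain ⟨r, t, hrt⟩ := h2x
    have hcomb : (⟨x, 1⟩ : ℤ√d) =
        r * (n * ⟨x, 1⟩) + t * (⟨x, 1⟩ * ⟨x, 1⟩) + (t * k : ℤ) * (n * m) := by
      ext <;> simp only [Zsqrtd.re_add, Zsqrtd.re_mul, Zsqrtd.im_add, Zsqrtd.im_mul,
        Zsqrtd.re_intCast, Zsqrtd.im_intCast]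
      · linear_combination -x * hrt + t * hk
      · linear_combination -hrt
    rw [SetLike.mem_coe, hcomb]
    refine add_mem (add_mem ?_ ?_) ?_ <;> refine Ideal.mul_mem_left _ _ (Ideal.mul_mem_mul ?_ ?_)
    exacts [intCast_mem, mk_one_mem, mk_one_mem, mk_one_mem, intCast_mem, intCast_mem]

theorem pow_eq (h2x : IsCoprime n (2 * x)) {k : ℕ} (h : n ^ k ∣ x ^ 2 - d) :
    quadIdeal d n x ^ k = quadIdeal d (n ^ k) x := by
  induction k with
  | zero =>
    rw [pow_zero, pow_zero, Ideal.one_eq_top, eq_comm, Ideal.eq_top_iff_one]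
    exact Int.cast_one (R := ℤ√d) ▸ intCast_mem
  | succ k ih =>
    rw [pow_succ', pow_succ', ih ((pow_dvd_pow n k.le_succ).trans h),
      mul_eq h2x (pow_succ' n k ▸ h)]

theorem norm_dvd_sq_sub_of_dvd {z : ℤ√d} (h : z ∣ ⟨x, 1⟩) : z.norm ∣ x ^ 2 - d := by
  obtain ⟨c, hc⟩ := h
  refine ⟨c.norm, ?_⟩
  rw [← Zsqrtd.norm_mul, ← hc, Zsqrtd.norm_def]
  ring

theorem eq_span_singleton_of_dvd {z : ℤ√d} (h : z ∣ ⟨x, 1⟩) :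
    quadIdeal d z.norm x = Ideal.span {z} := by
  obtain ⟨c, hc⟩ := h
  have hre : x = z.re * c.re + d * z.im * c.im := by simpa using congr_arg Zsqrtd.re hc
  have him : 1 = z.re * c.im + z.im * c.re := by simpa using congr_arg Zsqrtd.im hc
  apply le_antisymm
  · rw [quadIdeal, Ideal.span_le, Set.insert_subset_iff, Set.singleton_subset_iff]
    exact ⟨Ideal.mem_span_singleton.mpr ⟨star z, Zsqrtd.norm_eq_mul_conj z⟩,
      Ideal.mem_span_singleton.mpr ⟨c, hc⟩⟩
  · rw [Ideal.span_singleton_le_iff_mem]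
    have hcomb : c.im * (z.norm : ℤ√d) + z.im * ⟨x, 1⟩ = z := by
      ext <;> simp only [Zsqrtd.re_add, Zsqrtd.re_mul, Zsqrtd.im_add, Zsqrtd.im_mul,
        Zsqrtd.re_intCast, Zsqrtd.im_intCast, Zsqrtd.norm_def]
      · linear_combination z.im * hre - z.re * him
      · ring
    have hmem : c.im * (z.norm : ℤ√d) + z.im * ⟨x, 1⟩ ∈ quadIdeal d z.norm x :=
      add_mem (Ideal.mul_mem_left _ _ intCast_mem) (Ideal.mul_mem_left _ _ mk_one_mem)
    rwa [hcomb] at hmem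

theorem isPrincipal_iff (hd : d ≤ 0) (hn : 0 ≤ n) (h : n ∣ x ^ 2 - d) :
    (quadIdeal d n x).IsPrincipal ↔ ∃ z : ℤ√d, z.norm = n ∧ z ∣ ⟨x, 1⟩ := by
  constructor
  · rintro ⟨z, hz⟩
    have hz : quadIdeal d n x = Ideal.span {z} := hz
    have hzx : z ∣ ⟨x, 1⟩ := Ideal.mem_span_singleton.mp (hz ▸ mk_one_mem)
    have hnorm := norm_dvd_sq_sub_of_dvd hzx
    have heq : quadIdeal d n x = quadIdeal d z.norm x :=
      hz.trans (eq_span_singleton_of_dvd hzx).symm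
    refine ⟨z, Int.dvd_antisymm (Zsqrtd.norm_nonneg hd z) hn ?_ ?_, hzx⟩
    · have : (n : ℤ√d) ∈ quadIdeal d z.norm x := heq ▸ intCast_mem
      simpa [mem_iff hnorm] using this
    · have : (z.norm : ℤ√d) ∈ quadIdeal d n x := heq ▸ intCast_mem
      simpa [mem_iff h] using this
  · rintro ⟨z, rfl, hz⟩
    exact ⟨z, eq_span_singleton_of_dvd hz⟩

theorem not_isPrincipal_of_forall_not_isSquare (hd : d ≤ 0) (hn : 0 ≤ n) (h : n ∣ x ^ 2 - d) {V : ℕ}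
    (hV : n < -d * V ^ 2) (hsq : ∀ v < V, ¬IsSquare (n + d * (v : ℤ) ^ 2)) :
    ¬(quadIdeal d n x).IsPrincipal := by
  rw [isPrincipal_iff hd hn h]
  rintro ⟨z, rfl, -⟩
  have hz : z.norm + d * (z.im.natAbs : ℤ) ^ 2 = z.re * z.re := by
    rw [Int.natAbs_sq, Zsqrtd.norm_def]
    ring
  have him : (z.im.natAbs : ℤ) ^ 2 < (V : ℤ) ^ 2 :=
    lt_of_mul_lt_mul_left (by linarith [mul_self_nonneg z.re]) (neg_nonneg.mpr hd)
  exact hsq z.im.natAbs (lt_of_pow_lt_pow_left₀ 2 V.zero_le (mod_cast him)) ⟨z.re, hz⟩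

theorem congr (h : n ∣ y - x) : quadIdeal d n x = quadIdeal d n y := by
  obtain ⟨k, hk⟩ := h
  have : (⟨y, 1⟩ : ℤ√d) = ⟨x, 1⟩ + n * k := by
    ext <;> simp only [Zsqrtd.re_add, Zsqrtd.re_mul, Zsqrtd.im_add, Zsqrtd.im_mul,
      Zsqrtd.re_intCast, Zsqrtd.im_intCast]
    · linear_combination hk
    · ring
  rw [quadIdeal, quadIdeal, this, Ideal.span_pair_add_left_mul]

theorem mk_neg_one_mul_mk_one (d x : ℤ) :
    (⟨x, -1⟩ : ℤ√d) * ⟨x, 1⟩ = ((x ^ 2 - d : ℤ) : ℤ√d) := by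
  ext <;> simp only [Zsqrtd.re_mul, Zsqrtd.im_mul, Zsqrtd.re_intCast, Zsqrtd.im_intCast] <;> ring

theorem span_singleton_mul_eq (h : n * m = x ^ 2 - d) :
    Ideal.span {(⟨x, -1⟩ : ℤ√d)} * quadIdeal d n x =
      Ideal.span {(n : ℤ√d)} * quadIdeal d m (-x) := by
  have hn : (⟨x, -1⟩ : ℤ√d) * n = -(n * ⟨-x, 1⟩) := by ext <;> simp [mul_comm]
  have hnorm : (⟨x, -1⟩ : ℤ√d) * ⟨x, 1⟩ = n * m := by
    rw [mk_neg_one_mul_mk_one, ← h, Int.cast_mul]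
  simp only [quadIdeal, Ideal.span_mul_span, Set.singleton_mul, Set.image_pair]
  rw [hn, hnorm, Ideal.span_pair_comm, Ideal.span_pair_neg]

theorem exists_eq_of_mk_one_mem (hd : d < 0) {J : Ideal (ℤ√d)} (hJ : ⟨x, 1⟩ ∈ J) :
    ∃ n : ℕ, 0 < n ∧ (n : ℤ) ∣ x ^ 2 - d ∧ J = quadIdeal d n x := by
  let g := Submodule.IsPrincipal.generator (J.comap (Int.castRingHom (ℤ√d)))
  have hmem {k : ℤ} : (k : ℤ√d) ∈ J ↔ (g.natAbs : ℤ) ∣ k := by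
    rw [Int.natAbs_dvd, ← Submodule.IsPrincipal.mem_iff_generator_dvd, Ideal.mem_comap, eq_intCast]
  have hdvd : (g.natAbs : ℤ) ∣ x ^ 2 - d :=
    hmem.mp (mk_neg_one_mul_mk_one d x ▸ J.mul_mem_left _ hJ)
  have hpos : 0 < x ^ 2 - d := by nlinarith
  refine ⟨g.natAbs, Nat.pos_of_dvd_of_pos (Int.natCast_dvd.mp hdvd)
    (Int.natAbs_pos.mpr hpos.ne'), hdvd, ?_⟩
  ext z
  have hz : z = (z.re - x * z.im : ℤ) + z.im * ⟨x, 1⟩ := by ext <;> simp [mul_comm]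
  rw [mem_iff hdvd, ← hmem]
  nth_rw 1 [hz]
  exact J.add_mem_iff_left (J.mul_mem_left _ hJ)

theorem exists_span_singleton_mul [IsDedekindDomain (ℤ√d)] {I : Ideal (ℤ√d)} (hI : I ≠ ⊥) :
    ∃ c : ℤ, c ≠ 0 ∧ ∃ J : Ideal (ℤ√d), I = Ideal.span {(c : ℤ√d)} * J ∧ ∃ x, ⟨x, 1⟩ ∈ J := by
  let imHom : ℤ√d →+ ℤ := ⟨⟨Zsqrtd.im, rfl⟩, fun _ _ ↦ rfl⟩
  obtain ⟨c, hc⟩ := Int.subgroup_cyclic (I.toAddSubgroup.map imHom)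
  have him (k : ℤ) : (∃ z ∈ I, z.im = k) ↔ c ∣ k := by
    rw [← Int.mem_zmultiples_iff, AddSubgroup.zmultiples_eq_closure, ← hc]
    rfl
  have hdvd {z : ℤ√d} (hz : z ∈ I) : (c : ℤ√d) ∣ z :=
    (Zsqrtd.intCast_dvd c z).mpr
      ⟨(him _).mp ⟨Zsqrtd.sqrtd * z, I.mul_mem_left _ hz, by simp⟩, (him _).mp ⟨z, hz, rfl⟩⟩
  have hc0 : c ≠ 0 := by
    rintro rfl
    exact hI ((Submodule.eq_bot_iff I).mpr fun z hz ↦ by simpa using hdvd hz)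
  obtain ⟨J, rfl⟩ : Ideal.span {(c : ℤ√d)} ∣ I :=
    Ideal.dvd_iff_le.mpr fun z hz ↦ Ideal.mem_span_singleton.mpr (hdvd hz)
  obtain ⟨w, hw, hwim⟩ := (him c).mpr dvd_rfl
  obtain ⟨⟨x, y⟩, hxy, rfl⟩ := Ideal.mem_span_singleton_mul.mp hw
  obtain rfl : y = 1 := by simpa [hc0] using hwim
  exact ⟨c, hc0, J, rfl, x, hxy⟩

theorem mem_nonZeroDivisors [IsDomain (ℤ√d)] [NeZero n] :
    quadIdeal d n x ∈ nonZeroDivisors (Ideal (ℤ√d)) := by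
  refine mem_nonZeroDivisors_iff_ne_zero.mpr fun h ↦ NeZero.ne n ?_
  have : (n : ℤ√d) ∈ quadIdeal d n x := intCast_mem
  simpa [h] using this

end quadIdeal

/-! ### Reduced forms -/

section ReducedForm

variable {d n x : ℤ}

/-- The binary quadratic form with coefficients `a = n`, `b = 2 * x`, `c = (x ^ 2 - d) / n` is
positive definite, integral and reduced, that is `|b| ≤ a ≤ c`. To keep the condition decidable and
free of division, `a ≤ c` is stated as `n ^ 2 ≤ x ^ 2 - d`. No sign convention is imposed in the
boundary cases, so an ideal class may be represented by two reduced forms. -/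
def IsReducedForm (d n x : ℤ) : Prop :=
  0 < n ∧ n ∣ x ^ 2 - d ∧ 2 * |x| ≤ n ∧ n ^ 2 ≤ x ^ 2 - d

instance : Decidable (IsReducedForm d n x) :=
  inferInstanceAs (Decidable (_ ∧ _))

theorem two_mul_abs_bmod_le (x : ℤ) {n : ℕ} (hn : 0 < n) : 2 * |x.bmod n| ≤ n := by
  have hle := Int.le_bmod (x := x) hn
  have hge := Int.bmod_le (x := x) hn
  rcases abs_cases (x.bmod n) with ⟨h, -⟩ | ⟨h, -⟩ <;> omega

theorem three_mul_sq_le_of_isReducedForm (h : IsReducedForm d n x) : 3 * n ^ 2 ≤ -4 * d := by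
  obtain ⟨-, -, hx, hn⟩ := h
  have : (2 * |x|) ^ 2 ≤ n ^ 2 := by gcongr
  rw [mul_pow, sq_abs] at this
  linarith

end ReducedForm

/-! ### Ideal classes and reduced forms -/

section Class

variable {d n m x y : ℤ} [IsDedekindDomain (ℤ√d)]

/-- The class of the ideal `(n, x + √d)` in the class group of `ℤ[√d]`. -/
noncomputable def quadClass (d n x : ℤ) [IsDedekindDomain (ℤ√d)] [NeZero n] :
    ClassGroup (ℤ√d) :=
  ClassGroup.mk0 ⟨quadIdeal d n x, quadIdeal.mem_nonZeroDivisors⟩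

namespace quadClass

theorem mul_eq [NeZero n] [NeZero m] (h2x : IsCoprime n (2 * x)) (h : n * m ∣ x ^ 2 - d) :
    quadClass d n x * quadClass d m x = quadClass d (n * m) x := by
  simp only [quadClass, ← map_mul, ← quadIdeal.mul_eq h2x h]
  rfl

theorem pow_eq [NeZero n] (h2x : IsCoprime n (2 * x)) {k : ℕ} (h : n ^ k ∣ x ^ 2 - d) :
    quadClass d n x ^ k = quadClass d (n ^ k) x := by
  simp only [quadClass, ← map_pow, ← quadIdeal.pow_eq h2x h]
  rfl

theorem eq_one_iff [NeZero n] : quadClass d n x = 1 ↔ (quadIdeal d n x).IsPrincipal :=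
  ClassGroup.mk0_eq_one_iff _

theorem pow_eq_one [NeZero n] (h2x : IsCoprime n (2 * x)) {k : ℕ} {z : ℤ√d}
    (hz : z.norm = n ^ k) (hzx : z ∣ ⟨x, 1⟩) : quadClass d n x ^ k = 1 := by
  rw [pow_eq h2x (hz ▸ quadIdeal.norm_dvd_sq_sub_of_dvd hzx), eq_one_iff, ← hz]
  exact ⟨z, quadIdeal.eq_span_singleton_of_dvd hzx⟩

theorem congr [NeZero n] (h : n ∣ y - x) : quadClass d n x = quadClass d n y := by
  simp only [quadClass, quadIdeal.congr h]

theorem ne_one_of_forall_not_isSquare [NeZero n] (hd : d ≤ 0) (hn : 0 ≤ n) (h : n ∣ x ^ 2 - d)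
    {V : ℕ} (hV : n < -d * V ^ 2) (hsq : ∀ v < V, ¬IsSquare (n + d * (v : ℤ) ^ 2)) :
    quadClass d n x ≠ 1 :=
  eq_one_iff.not.mpr (quadIdeal.not_isPrincipal_of_forall_not_isSquare hd hn h hV hsq)

theorem eq_of_mul_eq [NeZero n] [NeZero m] (h : n * m = x ^ 2 - d) :
    quadClass d n x = quadClass d m (-x) :=
  ClassGroup.mk0_eq_mk0_iff.mpr ⟨⟨x, -1⟩, n, by simp [Zsqrtd.ext_iff],
    mod_cast NeZero.ne n, quadIdeal.span_singleton_mul_eq h⟩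

end quadClass

theorem exists_quadClass_eq (hd : d < 0) (C : ClassGroup (ℤ√d)) :
    ∃ n : ℕ, ∃ x : ℤ, ∃ _ : NeZero n, (n : ℤ) ∣ x ^ 2 - d ∧ quadClass d n x = C := by
  obtain ⟨⟨I, hI⟩, rfl⟩ := ClassGroup.mk0_surjective C
  obtain ⟨c, hc, J, hJ, x, hx⟩ :=
    quadIdeal.exists_span_singleton_mul (mem_nonZeroDivisors_iff_ne_zero.mp hI)
  obtain ⟨n, hn, hdvd, rfl⟩ := quadIdeal.exists_eq_of_mk_one_mem hd hx
  have : NeZero n := ⟨hn.ne'⟩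
  refine ⟨n, x, this, hdvd, ClassGroup.mk0_eq_mk0_iff.mpr ⟨c, 1, mod_cast hc, one_ne_zero, ?_⟩⟩
  rw [Ideal.span_singleton_one, Ideal.top_mul]
  exact hJ.symm

theorem exists_isReducedForm_quadClass_eq (hd : d < 0) (C : ClassGroup (ℤ√d)) :
    ∃ n x : ℤ, IsReducedForm d n x ∧ ∃ _ : NeZero n, quadClass d n x = C := by
  classical
  have hex := exists_quadClass_eq hd C
  let n := Nat.find hex
  obtain ⟨x, hn, hx, hC⟩ : ∃ x : ℤ, ∃ _ : NeZero n, (n : ℤ) ∣ x ^ 2 - d ∧ quadClass d n x = C :=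
    Nat.find_spec hex
  have hn0 : 0 < n := NeZero.pos n
  have hbmod : (n : ℤ) ∣ x.bmod n - x := Int.dvd_bmod_sub_self
  have hCb : quadClass d n (x.bmod n) = C := (quadClass.congr hbmod).symm.trans hC
  obtain ⟨m, hm⟩ : (n : ℤ) ∣ x.bmod n ^ 2 - d := by
    rw [← sub_add_sub_cancel _ (x ^ 2), sq_sub_sq]
    exact (hbmod.mul_left _).add hx
  have hm0 : 0 < m := by nlinarith
  lift m to ℕ using hm0.le
  have : NeZero m := ⟨by lia⟩
  have hnm : n ≤ m := Nat.find_min' hex ⟨-x.bmod n, this, by simp [hm],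
    (quadClass.eq_of_mul_eq hm.symm).symm.trans hCb⟩
  refine ⟨n, x.bmod n, ⟨mod_cast hn0, ⟨m, hm⟩, two_mul_abs_bmod_le x hn0, ?_⟩, inferInstance, hCb⟩
  rw [hm, sq]
  gcongr

theorem natCard_classGroup_le (hd : d < 0) {S : Finset (ℤ × ℤ)}
    (hS : ∀ n x, IsReducedForm d n x → (n, x) ∈ S) : Nat.card (ClassGroup (ℤ√d)) ≤ S.card := by
  choose n x hred hn hC using exists_isReducedForm_quadClass_eq hd
  let f (C : ClassGroup (ℤ√d)) : S := ⟨(n C, x C), hS _ _ (hred C)⟩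
  have hf : Function.Injective f := fun C C' h ↦ by
    obtain ⟨hnC, hxC⟩ : n C = n C' ∧ x C = x C' := Prod.ext_iff.mp (congr_arg Subtype.val h)
    rw [← hC C, ← hC C']
    simp only [hnC, hxC]
  simpa using Nat.card_le_card_of_injective f hf

end Class

/-! ### The discriminant `-9748` -/

theorem card_isReducedForm_neg2437 :
    ({p ∈ Finset.Icc 1 57 ×ˢ Finset.Icc (-28) 28 | IsReducedForm (-2437) p.1 p.2} :
      Finset (ℤ × ℤ)).card = 19 := by
  decide +kernel

section ZsqrtdNeg2437

variable [IsDedekindDomain (ℤ√(-2437))]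

theorem natCard_classGroup_zsqrtd_neg2437_le : Nat.card (ClassGroup (ℤ√(-2437))) ≤ 19 := by
  refine (natCard_classGroup_le (by norm_num) fun n x h ↦ ?_).trans_eq card_isReducedForm_neg2437
  have hn : n ≤ 57 := by nlinarith [three_mul_sq_le_of_isReducedForm h]
  have hx : |x| ≤ 28 := by linarith [h.2.2.1]
  simpa [h, hn, ← abs_le, hx] using Int.add_one_le_of_lt h.1

-- `135688262` is a square root of `-2437` modulo `29 ^ 3 * 41 ^ 3`, so that one `x` serves all the
-- ideals `(29 ^ i * 41 ^ j, x + √-2437)` with `i, j ≤ 3`.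
theorem quadClass_twentyNine_pow_three : quadClass (-2437) 29 135688262 ^ 3 = 1 :=
  quadClass.pow_eq_one (z := ⟨121, 2⟩) (by norm_num) (by norm_num [Zsqrtd.norm_def])
    ⟨⟨673184, -11127⟩, by norm_num [Zsqrtd.ext_iff]⟩

theorem quadClass_fortyOne_pow_three : quadClass (-2437) 41 135688262 ^ 3 = 1 :=
  quadClass.pow_eq_one (z := ⟨173, 4⟩) (by norm_num) (by norm_num [Zsqrtd.norm_def])
    ⟨⟨340594, -7875⟩, by norm_num [Zsqrtd.ext_iff]⟩

theorem quadClass_twentyNine_ne_one : quadClass (-2437) 29 135688262 ≠ 1 :=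
  quadClass.ne_one_of_forall_not_isSquare (V := 4) (by norm_num) (by norm_num) (by norm_num)
    (by norm_num) (by decide +kernel)

theorem quadClass_fortyOne_notMem_zpowers : quadClass (-2437) 41 135688262 ∉
    Subgroup.zpowers (quadClass (-2437) 29 135688262) := by
  refine notMem_zpowers_of_pow_mul_ne_one three_pos quadClass_twentyNine_pow_three fun k hk ↦ ?_
  have hdvd : (29 : ℤ) ^ k * 41 ∣ 135688262 ^ 2 - -2437 := by
    interval_cases k <;> norm_num
  rw [quadClass.pow_eq (by norm_num) (dvd_of_mul_right_dvd hdvd),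
    quadClass.mul_eq (IsCoprime.pow_left (by norm_num)) hdvd]
  refine quadClass.ne_one_of_forall_not_isSquare (V := 4) (by norm_num) (by positivity) hdvd
    ?_ ?_ <;> interval_cases k <;> decide +kernel

end ZsqrtdNeg2437

theorem three_class_group_of_Q_sqrt_neg2437 (K : Type*) [Field K]
    [NumberField K] (hdeg : Module.finrank ℚ K = 2)
    (α : K) (hα : α ^ 2 = -2437)
    (P : Sylow 3 (ClassGroup (𝓞 K))) :
    Nonempty (↥(P : Subgroup (ClassGroup (𝓞 K))) ≃*
      Multiplicative (ZMod 3 × ZMod 3)) := by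
  let : Algebra (ℤ√(-2437)) K := (Zsqrtd.lift ⟨α, by rw [← sq, hα]; norm_num⟩).toAlgebra
  have hprime : Prime (-2437 : ℤ) := Int.prime_iff_natAbs_prime.mpr (by norm_num)
  have : IsIntegralClosure (ℤ√(-2437)) ℤ K :=
    zsqrtd_isIntegralClosure hdeg hprime.squarefree (by norm_num)
  have : IsDomain (ℤ√(-2437)) :=
    (IsIntegralClosure.algebraMap_injective (ℤ√(-2437)) ℤ K).isDomain (algebraMap _ K)
  have : IsDedekindDomain (ℤ√(-2437)) := IsIntegralClosure.isDedekindDomain ℤ ℚ K _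
  let f : ClassGroup (𝓞 K) ≃* ClassGroup (ℤ√(-2437)) :=
    ClassGroup.mulEquiv (IsIntegralClosure.equiv ℤ (𝓞 K) K (ℤ√(-2437))).toRingEquiv
  have : Finite (ClassGroup (ℤ√(-2437))) := .of_equiv _ f.toEquiv
  obtain ⟨g⟩ := sylow_nonempty_mulEquiv_zmod_prod Nat.prime_three
    (natCard_classGroup_zsqrtd_neg2437_le.trans_lt (by norm_num)) quadClass_twentyNine_pow_three
    quadClass_fortyOne_pow_three quadClass_twentyNine_ne_one quadClass_fortyOne_notMem_zpowers
    (P.mapSurjective (f := f.toMonoidHom) f.surjective)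
  exact ⟨(f.subgroupMap P).trans g⟩
end

section
/- Let K = ℚ(√32009) be the real quadratic field of discriminant d = 32009. Then the 3-primary part of the ideal class group of the ring of integers of K (equivalently, its Sylow 3-subgroup) is isomorphic to (ℤ/3ℤ) × (ℤ/3ℤ); in particular, K has an elementary bicyclic 3-class group. -/
open NumberField

/-! Write `𝓞 K = ℤ[ω]` with `ω ^ 2 = ω + 8002`. By Minkowski's bound the class group is generated
by the primes over rational primes `p ≤ 89`, and elements of small norm reduce all of these to a
prime `P` over `2` and a prime `Q` over `5`, whose cubes are generated by `γ = 89 + ω` and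
`δ = 21883 + 246 ω`. Conversely, if `P ^ i * Q ^ j` is principal then `γ ^ i * δ ^ j` is a unit
times a cube. The unit `ε = 18917767 + 212666 ω` is not a cube modulo a prime over `13`, so it
generates the units modulo cubes. It is a cube modulo suitable primes over `103` and `601`; modulo
the first `δ` is a cube and `γ` is not, modulo the second it is the other way round, so `3` divides
both `i` and `j`. -/

open Module
open scoped nonZeroDivisors QuadraticAlgebra

section QuadraticAlgebra

variable {R : Type*} [CommRing R] {a b : R}

theorem quadraticAlgebra_basis_zero : QuadraticAlgebra.basis a b 0 = 1 := by
  ext <;> simp [QuadraticAlgebra.basis]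

theorem quadraticAlgebra_basis_one : QuadraticAlgebra.basis a b 1 = ω := by
  ext <;> simp [QuadraticAlgebra.basis]

theorem algebraNorm_eq_quadraticAlgebraNorm (z : QuadraticAlgebra R a b) :
    Algebra.norm R z = z.norm := by
  rw [Algebra.norm_apply]
  exact QuadraticAlgebra.det_toLinearMap_eq_norm z

theorem algebraTrace_eq_quadraticAlgebraTrace (z : QuadraticAlgebra R a b) :
    Algebra.trace R (QuadraticAlgebra R a b) z = z.trace := by
  rw [Algebra.trace_eq_matrix_trace (QuadraticAlgebra.basis a b), Matrix.trace_fin_two,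
    QuadraticAlgebra.trace_def]
  simp only [Algebra.leftMulMatrix_eq_repr_mul, quadraticAlgebra_basis_zero,
    quadraticAlgebra_basis_one, QuadraticAlgebra.basis_repr_apply, Matrix.cons_val_zero,
    Matrix.cons_val_one, Matrix.cons_val_fin_one, QuadraticAlgebra.re_mul, QuadraticAlgebra.im_mul,
    QuadraticAlgebra.omega_re, QuadraticAlgebra.omega_im, mul_one, mul_zero, zero_add, add_zero]
  ring

theorem discr_quadraticAlgebra_basis :
    Algebra.discr R (QuadraticAlgebra.basis a b) = b ^ 2 + 4 * a := by
  simp only [Algebra.discr_def, Matrix.det_fin_two, Algebra.traceMatrix_apply,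
    Algebra.traceForm_apply, quadraticAlgebra_basis_zero, quadraticAlgebra_basis_one,
    algebraTrace_eq_quadraticAlgebraTrace, QuadraticAlgebra.trace_def, QuadraticAlgebra.re_one,
    QuadraticAlgebra.im_one, QuadraticAlgebra.re_mul, QuadraticAlgebra.im_mul,
    QuadraticAlgebra.omega_re, QuadraticAlgebra.omega_im, mul_one, one_mul, mul_zero, zero_add,
    add_zero]
  ring

theorem exists_algEquiv_quadraticAlgebra_omega_eq {F L : Type*} [Field F] [Field L]
    [Algebra F L] (hdeg : finrank F L = 2) {c d : F} (hcd : ∀ r : F, r ^ 2 ≠ c + d * r) {w : L}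
    (hw : w ^ 2 = algebraMap F L c + algebraMap F L d * w) :
    ∃ e : QuadraticAlgebra F c d ≃ₐ[F] L, e ω = w := by
  have := Fact.mk hcd
  have : FiniteDimensional F L := .of_finrank_eq_succ hdeg
  let f : QuadraticAlgebra F c d →ₐ[F] L :=
    QuadraticAlgebra.lift ⟨w, by rw [← sq, hw, Algebra.smul_def, Algebra.smul_def, mul_one]⟩
  have hf : Function.Bijective f :=
    ⟨f.injective, (LinearMap.injective_iff_surjective_of_finrank_eq_finrank
      (f := f.toLinearMap) ((QuadraticAlgebra.finrank_eq_two c d).trans hdeg.symm)).1 f.injective⟩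
  exact ⟨.ofBijective f hf, by simp [f]⟩

end QuadraticAlgebra

section RingOfIntegers

variable {K : Type*} [Field K] [NumberField K] {c : ℤ}

theorem exists_int_eq_of_squarefree_mul_sq_eq {d m : ℤ} (hd : Squarefree d) {y : ℚ}
    (h : d * y ^ 2 = m) : ∃ q : ℤ, y = q := by
  have hnum : d * y.num ^ 2 = m * (y.den : ℤ) ^ 2 := by
    have : (y.den : ℚ) ≠ 0 := by exact_mod_cast y.den_nz
    rw [← Rat.num_div_den y] at h
    field_simp at h
    rw [mul_comm m]
    exact_mod_cast h
  have hcop : IsCoprime ((y.den : ℤ) ^ 2) (y.num ^ 2) :=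
    (Int.isCoprime_iff_gcd_eq_one.2 (Nat.Coprime.symm y.reduced)).pow
  have hdvd : (y.den : ℤ) * y.den ∣ d := by
    rw [← sq]
    exact hcop.dvd_of_dvd_mul_right (Dvd.intro_left _ hnum.symm)
  have hden : y.den = 1 := by simpa [Int.isUnit_iff] using hd _ hdvd
  exact ⟨y.num, (Rat.coe_int_num_of_den_eq_one hden).symm⟩

theorem exists_int_of_trace_norm_int (hc : Squarefree (1 + 4 * c)) {x y : ℚ} {t n : ℤ}
    (ht : 2 * x + y = t) (hn : x ^ 2 + x * y - c * y ^ 2 = n) :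
    ∃ p q : ℤ, x = p ∧ y = q := by
  obtain ⟨q, rfl⟩ : ∃ q : ℤ, y = q := by
    refine exists_int_eq_of_squarefree_mul_sq_eq (m := t ^ 2 - 4 * n) hc ?_
    push_cast
    rw [← ht, ← hn]
    ring
  have hsq : t ^ 2 - q ^ 2 = 4 * (n + c * q ^ 2) := by
    have : (t : ℚ) ^ 2 - q ^ 2 = 4 * (n + c * q ^ 2) := by rw [← ht, ← hn]; ring
    exact_mod_cast this
  obtain ⟨p, hp⟩ : Even (t - q) := by
    have : Even (t ^ 2 - q ^ 2) := hsq ▸ ⟨2 * (n + c * q ^ 2), by ring⟩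
    simpa [Int.even_sub, Int.even_pow] using this
  have hp' : (t : ℚ) - q = p + p := by exact_mod_cast hp
  exact ⟨p, q, by linarith, rfl⟩

theorem nonempty_algEquiv_ringOfIntegers (hdeg : finrank ℚ K = 2) (hc : Squarefree (1 + 4 * c))
    (hc1 : ¬ IsSquare (1 + 4 * c)) {α : K} (hα : α ^ 2 = (1 + 4 * c : ℤ)) :
    Nonempty (QuadraticAlgebra ℤ c 1 ≃ₐ[ℤ] 𝓞 K) := by
  have hw : ((1 + α) / 2) ^ 2 = (c : K) + (1 + α) / 2 := by
    push_cast at hα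
    linear_combination hα / 4
  have hroot (r : ℚ) : r ^ 2 ≠ c + 1 * r := fun hr ↦
    hc1 (Rat.isSquare_intCast_iff.1 ⟨2 * r - 1, by push_cast; linear_combination -4 * hr⟩)
  obtain ⟨e, he⟩ := exists_algEquiv_quadraticAlgebra_omega_eq hdeg hroot
    (w := (1 + α) / 2) (by simpa using hw)
  have hwint : IsIntegral ℤ ((1 + α) / 2) := by
    refine ⟨.X ^ 2 - .X - .C c, by monicity!, ?_⟩
    simp [hw, -eq_intCast, Polynomial.eval₂_C]
  obtain ⟨v, hv⟩ : ∃ v : 𝓞 K, (v : K) = (1 + α) / 2 := ⟨⟨_, hwint⟩, rfl⟩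
  let f : QuadraticAlgebra ℤ c 1 →ₐ[ℤ] 𝓞 K :=
    QuadraticAlgebra.lift ⟨v, RingOfIntegers.ext (by simpa [sq, hv] using hw)⟩
  have hf (z : QuadraticAlgebra ℤ c 1) : (f z : K) = e ⟨z.re, z.im⟩ := by
    rw [QuadraticAlgebra.mk_eq_add_smul_omega]
    simp [f, he, hv, Algebra.smul_def]
  refine ⟨.ofBijective f ⟨fun z z' h ↦ ?_, fun x ↦ ?_⟩⟩
  · have := e.injective ((hf z).symm.trans ((congrArg _ h).trans (hf z')))
    simpa [QuadraticAlgebra.ext_iff] using this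
  · have ht := algebraTrace_eq_quadraticAlgebraTrace (e.symm x)
    have hn := algebraNorm_eq_quadraticAlgebraNorm (e.symm x)
    rw [Algebra.trace_eq_of_algEquiv, ← Algebra.coe_trace_int, QuadraticAlgebra.trace_def,
      one_mul] at ht
    rw [Algebra.norm_eq_of_algEquiv, ← Algebra.coe_norm_int, QuadraticAlgebra.norm_def] at hn
    obtain ⟨p, q, hp, hq⟩ := exists_int_of_trace_norm_int hc ht.symm (by rw [hn]; ring)
    refine ⟨⟨p, q⟩, RingOfIntegers.ext ?_⟩
    rw [hf, e.eq_symm_apply.symm]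
    ext <;> simp [hp, hq]

theorem discr_eq_of_algEquiv_quadraticAlgebra {a b : ℤ}
    (e : QuadraticAlgebra ℤ a b ≃ₐ[ℤ] 𝓞 K) : discr K = b ^ 2 + 4 * a := by
  rw [← discr_eq_discr K ((QuadraticAlgebra.basis a b).map e.toLinearEquiv),
    ← discr_quadraticAlgebra_basis (a := a) (b := b),
    Algebra.discr_eq_discr_of_algEquiv _ e]
  rfl

end RingOfIntegers

section QuadraticDedekind

variable {R : Type*} [CommRing R] [IsDedekindDomain R] {H : Subgroup (ClassGroup R)} {m n p : ℕ}

/-- Every nonzero prime ideal of `R` containing the natural number `n` has its class in `H`.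
As this is multiplicative in `n`, it reduces membership in `H` to ideals over prime numbers. -/
def PrimesOverMem (H : Subgroup (ClassGroup R)) (n : ℕ) : Prop :=
  ∀ P : (Ideal R)⁰, (P : Ideal R).IsPrime → (n : R) ∈ (P : Ideal R) → ClassGroup.mk0 P ∈ H

namespace PrimesOverMem

theorem one : PrimesOverMem H 1 := fun _ hP h1 ↦
  absurd ((Ideal.eq_top_iff_one _).2 (by simpa using h1)) hP.ne_top

theorem of_dvd (hn : PrimesOverMem H n) (hmn : m ∣ n) : PrimesOverMem H m := fun P hP hm ↦
  hn P hP (Ideal.mem_of_dvd _ (Nat.cast_dvd_cast hmn) hm)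

theorem mul (hm : PrimesOverMem H m) (hn : PrimesOverMem H n) : PrimesOverMem H (m * n) :=
  fun P hP hmn ↦ (hP.mem_or_mem (by simpa using hmn)).elim (hm P hP) (hn P hP)

theorem pow (hn : PrimesOverMem H n) (k : ℕ) : PrimesOverMem H (n ^ k) := fun P hP hnk ↦
  hn P hP (hP.mem_of_pow_mem k (by simpa using hnk))

theorem of_forall_prime (hn : n ≠ 0) (h : ∀ p : ℕ, p.Prime → p ∣ n → PrimesOverMem H p) :
    PrimesOverMem H n := by
  induction n using Nat.recOnMul with
  | zero => exact absurd rfl hn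
  | one => exact one
  | prime p hp => exact h p hp dvd_rfl
  | mul a b ha hb =>
    exact (ha (left_ne_zero_of_mul hn) fun p hp hpa ↦ h p hp (hpa.mul_right b)).mul
      (hb (right_ne_zero_of_mul hn) fun p hp hpb ↦ h p hp (hpb.mul_left a))

theorem mk0_mem (hn : PrimesOverMem H n) {I : (Ideal R)⁰} (hI : (n : R) ∈ (I : Ideal R)) :
    ClassGroup.mk0 I ∈ H := by
  obtain ⟨I, hI0⟩ := I
  change (n : R) ∈ I at hI
  induction I using UniqueFactorizationMonoid.induction_on_prime with
  | h₁ => exact absurd rfl (nonZeroDivisors.ne_zero hI0)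
  | h₂ I hunit =>
    obtain rfl : I = 1 := by rwa [Ideal.isUnit_iff, ← Ideal.one_eq_top] at hunit
    convert H.one_mem
    exact map_one ClassGroup.mk0
  | h₃ J P hJ hP ih =>
    have hJ0 : J ∈ (Ideal R)⁰ := mem_nonZeroDivisors_of_ne_zero hJ
    have hP0 : P ∈ (Ideal R)⁰ := mem_nonZeroDivisors_of_ne_zero hP.ne_zero
    have hmul : (⟨P * J, hI0⟩ : (Ideal R)⁰) = ⟨P, hP0⟩ * ⟨J, hJ0⟩ := rfl
    rw [hmul, map_mul]
    exact H.mul_mem (hn ⟨P, hP0⟩ (Ideal.isPrime_of_prime hP) (Ideal.mul_le_left hI))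
      (ih hJ0 (Ideal.mul_le_right hI))

end PrimesOverMem

theorem isCoprime_of_isPrime_of_ne {P Q : (Ideal R)⁰} (hP : (P : Ideal R).IsPrime)
    (hQ : (Q : Ideal R).IsPrime) (hPQ : P ≠ Q) : IsCoprime (P : Ideal R) Q :=
  have := hP.isMaximal (nonZeroDivisors.coe_ne_zero P)
  have := hQ.isMaximal (nonZeroDivisors.coe_ne_zero Q)
  Ideal.isCoprime_of_isMaximal (Subtype.coe_ne_coe.2 hPQ)

theorem mk0_mul_mk0_eq_one_of_mul_eq_span {I J : (Ideal R)⁰} {x : R}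
    (h : (I * J : Ideal R) = Ideal.span {x}) : ClassGroup.mk0 I * ClassGroup.mk0 J = 1 := by
  rw [← map_mul, ClassGroup.mk0_eq_one_iff, Submonoid.coe_mul, h]
  exact ⟨x, rfl⟩

theorem mk0_pow_eq_one_of_pow_eq_span {I : (Ideal R)⁰} {k : ℕ} {x : R}
    (h : (I : Ideal R) ^ k = Ideal.span {x}) : ClassGroup.mk0 I ^ k = 1 := by
  rw [← map_pow, ClassGroup.mk0_eq_one_iff, SubmonoidClass.coe_pow, h]
  exact ⟨x, rfl⟩

variable [Module.Free ℤ R] [Module.Finite ℤ R]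

theorem dvd_absNorm_of_mem (hp : p.Prime) {I : Ideal R} (hI : I ≠ ⊤) (hpI : (p : R) ∈ I) :
    p ∣ Ideal.absNorm I := by
  have hdvd : Ideal.absNorm I ∣ p ^ finrank ℤ R := by
    rw [← Ideal.absNorm_span_natCast]
    exact Ideal.absNorm_dvd_absNorm_of_le ((Ideal.span_singleton_le_iff_mem _).2 hpI)
  obtain ⟨k, -, hk⟩ := (Nat.dvd_prime_pow hp).1 hdvd
  rw [hk]
  refine dvd_pow_self p ?_
  rintro rfl
  exact hI (Ideal.absNorm_eq_one_iff.1 hk)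

theorem absNorm_eq_of_mem (hR : finrank ℤ R = 2) (hp : p.Prime) {I : Ideal R} (hI : I ≠ ⊤)
    (hpI : (p : R) ∈ I) (hne : I ≠ Ideal.span {(p : R)}) : Ideal.absNorm I = p := by
  obtain ⟨J, hJ⟩ := Ideal.dvd_iff_le.2 ((Ideal.span_singleton_le_iff_mem _).2 hpI)
  have hmul : Ideal.absNorm I * Ideal.absNorm J = p ^ 2 := by
    rw [← map_mul, ← hJ, Ideal.absNorm_span_natCast, hR]
  have hI1 : Ideal.absNorm I ≠ 1 := by rwa [Ne, Ideal.absNorm_eq_one_iff]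
  have hJ1 : Ideal.absNorm J ≠ 1 := by
    rw [Ne, Ideal.absNorm_eq_one_iff]
    rintro rfl
    exact hne (by rw [hJ, Ideal.mul_top])
  exact ((hp.mul_eq_prime_sq_iff hI1 hJ1).1 hmul).1

theorem mul_eq_span_natCast_of_isPrime_of_ne (hR : finrank ℤ R = 2) (hp : p.Prime)
    {P Q : (Ideal R)⁰} (hP : (P : Ideal R).IsPrime) (hQ : (Q : Ideal R).IsPrime)
    (hpP : (p : R) ∈ (P : Ideal R)) (hpQ : (p : R) ∈ (Q : Ideal R)) (hPQ : P ≠ Q) :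
    (P * Q : Ideal R) = Ideal.span {(p : R)} := by
  have hcop := isCoprime_of_isPrime_of_ne hP hQ hPQ
  obtain ⟨J, hJ⟩ := hcop.mul_dvd
    (Ideal.dvd_iff_le.2 ((Ideal.span_singleton_le_iff_mem _).2 hpP))
    (Ideal.dvd_iff_le.2 ((Ideal.span_singleton_le_iff_mem _).2 hpQ))
  have hdvd : p * p * Ideal.absNorm J ∣ p * p * 1 := by
    have hN : Ideal.absNorm (Ideal.span {(p : R)}) = p * p * 1 := by
      rw [Ideal.absNorm_span_natCast, hR, sq, mul_one]
    rw [← hN, hJ, map_mul, map_mul]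
    gcongr
    exacts [dvd_absNorm_of_mem hp hP.ne_top hpP, dvd_absNorm_of_mem hp hQ.ne_top hpQ]
  have hJ1 : Ideal.absNorm J = 1 :=
    Nat.dvd_one.1 (Nat.dvd_of_mul_dvd_mul_left (mul_pos hp.pos hp.pos) hdvd)
  rw [hJ, Ideal.absNorm_eq_one_iff.1 hJ1, Ideal.mul_top]

theorem exists_mul_eq_span_of_dvd_norm (hp : p.Prime) {γ : R} (hγ : γ ≠ 0)
    (hpγ : p ∣ (Algebra.norm ℤ γ).natAbs) :
    ∃ P J : (Ideal R)⁰, (P : Ideal R).IsPrime ∧ (p : R) ∈ (P : Ideal R) ∧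
      (P * J : Ideal R) = Ideal.span {γ} := by
  rw [← Ideal.absNorm_span_singleton] at hpγ
  obtain ⟨P, hP, hPp, J, hJ⟩ := Ideal.exists_isMaximal_dvd_of_dvd_absNorm' hp _ hpγ
  have hPJ : P * J ≠ ⊥ := by rwa [← hJ, Ne, Ideal.span_singleton_eq_bot]
  have hpP : (p : ℤ) ∈ P.under ℤ := hPp ▸ Ideal.mem_span_singleton_self _
  exact ⟨⟨P, mem_nonZeroDivisors_of_ne_zero (left_ne_zero_of_mul hPJ)⟩,
    ⟨J, mem_nonZeroDivisors_of_ne_zero (right_ne_zero_of_mul hPJ)⟩, hP.isPrime,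
    by simpa using hpP, hJ.symm⟩

theorem eq_of_isPrime_of_not_natCast_dvd (hR : finrank ℤ R = 2) (hp : p.Prime) {γ : R}
    (hpγ : ¬ (p : R) ∣ γ) {P Q : (Ideal R)⁰} (hP : (P : Ideal R).IsPrime)
    (hQ : (Q : Ideal R).IsPrime) (hpP : (p : R) ∈ (P : Ideal R)) (hpQ : (p : R) ∈ (Q : Ideal R))
    (hγP : γ ∈ (P : Ideal R)) (hγQ : γ ∈ (Q : Ideal R)) : P = Q := by
  by_contra hPQ
  have hcop := isCoprime_of_isPrime_of_ne hP hQ hPQ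
  have hγPQ : γ ∈ (P ⊓ Q : Ideal R) := ⟨hγP, hγQ⟩
  rw [← Ideal.mul_eq_inf_of_isCoprime hcop,
    mul_eq_span_natCast_of_isPrime_of_ne hR hp hP hQ hpP hpQ hPQ] at hγPQ
  exact hpγ (Ideal.mem_span_singleton.1 hγPQ)

theorem exists_pow_eq_span_of_norm_eq_prime_pow (hR : finrank ℤ R = 2) (hp : p.Prime) {γ : R}
    {k : ℕ} (hk : k ≠ 0) (hγ : (Algebra.norm ℤ γ).natAbs = p ^ k) (hpγ : ¬ (p : R) ∣ γ) :
    ∃ P : (Ideal R)⁰, (P : Ideal R).IsPrime ∧ (p : R) ∈ (P : Ideal R) ∧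
      (P : Ideal R) ^ k = Ideal.span {γ} := by
  have hγ0 : γ ≠ 0 := by
    rintro rfl
    exact hpγ (dvd_zero _)
  obtain ⟨P, J, hP, hpP, hPJ⟩ := exists_mul_eq_span_of_dvd_norm hp hγ0 (hγ ▸ dvd_pow_self p hk)
  have hγP : γ ∈ (P : Ideal R) :=
    (Ideal.span_singleton_le_iff_mem _).1 (hPJ ▸ Ideal.mul_le_left)
  have huniq (Q : Ideal R)
      (hQ : Q ∈ UniqueFactorizationMonoid.normalizedFactors (Ideal.span {γ})) : Q = P := by
    have hQ0 := UniqueFactorizationMonoid.prime_of_normalized_factor Q hQ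
    have hQprime : Q.IsPrime := Ideal.isPrime_of_prime hQ0
    have hγQ := Ideal.le_of_dvd (UniqueFactorizationMonoid.dvd_of_mem_normalizedFactors hQ)
    have hpQ : (p : R) ∈ Q := hQprime.mem_of_pow_mem k <| by
      rw [← Nat.cast_pow, ← hγ, ← Ideal.absNorm_span_singleton]
      exact hγQ (Ideal.absNorm_mem _)
    exact congrArg Subtype.val <| eq_of_isPrime_of_not_natCast_dvd hR hp hpγ
      (P := ⟨Q, mem_nonZeroDivisors_of_ne_zero hQ0.ne_zero⟩) hQprime hP hpQ hpP
      ((Ideal.span_singleton_le_iff_mem _).1 hγQ) hγP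
  have hpow : Ideal.span {γ} = (P : Ideal R) ^
      (UniqueFactorizationMonoid.normalizedFactors (Ideal.span {γ})).card := by
    rw [← Multiset.prod_replicate, ← Multiset.eq_replicate_card.2 huniq,
      Ideal.prod_normalizedFactors_eq_self]
    rwa [Ne, Ideal.span_singleton_eq_bot]
  have hN : Ideal.absNorm (P : Ideal R) = p := by
    refine absNorm_eq_of_mem hR hp hP.ne_top hpP fun h ↦ hpγ ?_
    rwa [h, Ideal.mem_span_singleton] at hγP
  have hcard : (UniqueFactorizationMonoid.normalizedFactors (Ideal.span {γ})).card = k := by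
    apply Nat.pow_right_injective hp.two_le
    change p ^ _ = p ^ k
    rw [← hγ, ← Ideal.absNorm_span_singleton]
    conv_rhs => rw [hpow, map_pow, hN]
  exact ⟨P, hP, hpP, by rw [hpow, hcard]⟩

namespace PrimesOverMem

theorem of_mk0_mem (hR : finrank ℤ R = 2) (hp : p.Prime) {P : (Ideal R)⁰}
    (hP : (P : Ideal R).IsPrime) (hpP : (p : R) ∈ (P : Ideal R)) (hH : ClassGroup.mk0 P ∈ H) :
    PrimesOverMem H p := by
  intro Q hQ hpQ
  obtain rfl | hPQ := eq_or_ne P Q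
  · exact hH
  · rw [← inv_eq_of_mul_eq_one_right (mk0_mul_mk0_eq_one_of_mul_eq_span
      (mul_eq_span_natCast_of_isPrime_of_ne hR hp hP hQ hpP hpQ hPQ))]
    exact H.inv_mem hH

theorem of_norm_eq_mul (hR : finrank ℤ R = 2) (hp : p.Prime) (hm : PrimesOverMem H m) {β : R}
    (hβ : (Algebra.norm ℤ β).natAbs = p * m) : PrimesOverMem H p := by
  obtain rfl | hβ0 := eq_or_ne β 0
  · rw [Algebra.norm_zero, Int.natAbs_zero, eq_comm] at hβ
    rw [(mul_eq_zero.1 hβ).resolve_left hp.ne_zero] at hm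
    exact hm.of_dvd (dvd_zero p)
  obtain ⟨P, J, hP, hpP, hPJ⟩ := exists_mul_eq_span_of_dvd_norm hp hβ0 (hβ ▸ dvd_mul_right p m)
  have hN : Ideal.absNorm (P : Ideal R) * Ideal.absNorm (J : Ideal R) = p * m := by
    rw [← map_mul, hPJ, Ideal.absNorm_span_singleton, hβ]
  have hJm : Ideal.absNorm (J : Ideal R) ∣ m := by
    refine Nat.dvd_of_mul_dvd_mul_left hp.pos (hN ▸ ?_)
    gcongr
    exact dvd_absNorm_of_mem hp hP.ne_top hpP
  have hJ : ClassGroup.mk0 J ∈ H :=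
    hm.mk0_mem (Ideal.mem_of_dvd _ (Nat.cast_dvd_cast hJm) (Ideal.absNorm_mem _))
  refine of_mk0_mem hR hp hP hpP ?_
  rw [eq_inv_of_mul_eq_one_left (mk0_mul_mk0_eq_one_of_mul_eq_span hPJ)]
  exact H.inv_mem hJ

theorem of_isEmpty_ringHom (hR : finrank ℤ R = 2) (hp : p.Prime) (h : IsEmpty (R →+* ZMod p)) :
    PrimesOverMem H p := by
  intro P hP hpP
  by_cases hPp : (P : Ideal R) = Ideal.span {(p : R)}
  · rw [(ClassGroup.mk0_eq_one_iff P.2).2 ⟨p, hPp⟩]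
    exact H.one_mem
  · have hcard : Nat.card (R ⧸ (P : Ideal R)) = p := by
      rw [← Submodule.cardQuot_apply, ← Ideal.absNorm_apply,
        absNorm_eq_of_mem hR hp hP.ne_top hpP hPp]
    have : Finite (R ⧸ (P : Ideal R)) := Nat.finite_of_card_ne_zero (hcard ▸ hp.ne_zero)
    have := Fintype.ofFinite (R ⧸ (P : Ideal R))
    let e : ZMod p ≃+* R ⧸ (P : Ideal R) :=
      ZMod.ringEquivOfPrime _ hp (by rw [← Nat.card_eq_fintype_card, hcard])
    exact (h.false (e.symm.toRingHom.comp (Ideal.Quotient.mk _))).elim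

end PrimesOverMem

end QuadraticDedekind

section RealQuadratic

variable {K : Type*} [Field K] [NumberField K]

theorem isTotallyReal_of_finrank_eq_two_of_discr_pos (hdeg : finrank ℚ K = 2)
    (hpos : 0 < discr K) : IsTotallyReal K := by
  rw [← nrComplexPlaces_eq_zero_iff]
  have hcard := InfinitePlace.card_add_two_mul_card_eq_rank K
  have heven : Even (InfinitePlace.nrComplexPlaces K) := by
    rw [← neg_one_pow_eq_one_iff_even (R := ℤ) (by decide), ← sign_discr,
      Int.sign_eq_one_of_pos hpos]
  have hne : InfinitePlace.nrComplexPlaces K ≠ 1 := fun h ↦ Nat.not_even_one (h ▸ heven)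
  omega

theorem sq_eq_one_of_mem_torsion [IsTotallyReal K] {x : (𝓞 K)ˣ} (hx : x ∈ Units.torsion K) :
    x ^ 2 = 1 := by
  have hord : orderOf (x : K) = orderOf x := by
    rw [← orderOf_units]
    exact orderOf_injective (algebraMap (𝓞 K) K : 𝓞 K →* K) RingOfIntegers.coe_injective (x : 𝓞 K)
  have hpos : 0 < orderOf x := orderOf_pos_iff.2 ((CommGroup.mem_torsion _).1 hx)
  have hle : orderOf x ≤ 2 := by
    by_contra! hc
    have hreal := InfinitePlace.IsPrimitiveRoot.nrRealPlaces_eq_zero_of_two_lt (hord ▸ hc)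
      (IsPrimitiveRoot.orderOf (x : K))
    exact (finrank_pos (R := ℚ) (M := K)).ne' ((IsTotallyReal.finrank K).trans hreal)
  rw [← orderOf_dvd_iff_pow_eq_one]
  interval_cases orderOf x <;> decide

theorem exists_zpowers_sup_torsion_eq_top (h : Units.rank K = 1) :
    ∃ f : (𝓞 K)ˣ, Subgroup.zpowers f ⊔ Units.torsion K = ⊤ := by
  have : Unique (Fin (Units.rank K)) := h ▸ inferInstance
  refine ⟨Units.fundSystem K default, ?_⟩
  rw [← Units.closure_fundSystem_sup_torsion_eq_top, Set.range_unique, Subgroup.zpowers_eq_closure]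

theorem zpowers_sup_range_powMonoidHom_eq_top {G : Type*} [CommGroup G] {p : ℕ} (hp : p.Prime)
    {f x : G} (hf : Subgroup.zpowers f ⊔ (powMonoidHom p : G →* G).range = ⊤)
    (hx : x ∉ (powMonoidHom p : G →* G).range) :
    Subgroup.zpowers x ⊔ (powMonoidHom p : G →* G).range = ⊤ := by
  obtain ⟨_, ⟨e, rfl⟩, _, ⟨y, rfl⟩, hxy⟩ := Subgroup.mem_sup.1 (hf ▸ Subgroup.mem_top x)
  have hpe : ¬ (p : ℤ) ∣ e := by
    rintro ⟨k, rfl⟩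
    exact hx ⟨f ^ k * y, by simp [← hxy, mul_pow, zpow_mul']⟩
  obtain ⟨r, s, hrs⟩ := (Nat.prime_iff_prime_int.1 hp).coprime_iff_not_dvd.2 hpe
  set S := Subgroup.zpowers x ⊔ (powMonoidHom p : G →* G).range
  have hpow (z : G) : z ^ p ∈ S := Subgroup.mem_sup_right ⟨z, rfl⟩
  have hfe : f ^ e ∈ S := by
    rw [← S.mul_mem_cancel_right (hpow y)]
    exact Subgroup.mem_sup_left (hxy ▸ Subgroup.mem_zpowers x)
  have hfS : f ∈ S := by
    have hf1 : f = (f ^ p) ^ r * (f ^ e) ^ s := by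
      rw [← zpow_natCast f p, ← zpow_mul, ← zpow_mul, ← zpow_add, mul_comm _ r, mul_comm e s, hrs,
        zpow_one]
    rw [hf1]
    exact S.mul_mem (S.zpow_mem (hpow f) r) (S.zpow_mem hfe s)
  rw [eq_top_iff, ← hf, sup_le_iff, Subgroup.zpowers_le]
  exact ⟨hfS, le_sup_right⟩

theorem zpowers_sup_range_powMonoidHom_units_eq_top [IsTotallyReal K] (hdeg : finrank ℚ K = 2)
    {p : ℕ} (hp : p.Prime) (hp2 : Odd p) {ε : (𝓞 K)ˣ}
    (hε : ε ∉ (powMonoidHom p : (𝓞 K)ˣ →* _).range) :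
    Subgroup.zpowers ε ⊔ (powMonoidHom p : (𝓞 K)ˣ →* _).range = ⊤ := by
  have hrank : Units.rank K = 1 := by
    rw [Units.rank, InfinitePlace.card_eq_nrRealPlaces_add_nrComplexPlaces,
      IsTotallyReal.nrComplexPlaces_eq_zero, ← IsTotallyReal.finrank, hdeg]
  obtain ⟨f, hf⟩ := exists_zpowers_sup_torsion_eq_top hrank
  refine zpowers_sup_range_powMonoidHom_eq_top hp (f := f) ?_ hε
  rw [eq_top_iff, ← hf]
  refine sup_le_sup_left (fun x hx ↦ ?_) _
  obtain ⟨k, rfl⟩ := hp2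
  exact ⟨x, by simp [pow_succ, pow_mul, sq_eq_one_of_mem_torsion hx]⟩

theorem exists_mk0_eq_and_absNorm_sq_le [IsTotallyReal K] (hdeg : finrank ℚ K = 2)
    (C : ClassGroup (𝓞 K)) : ∃ I : (Ideal (𝓞 K))⁰, ClassGroup.mk0 I = C ∧
      4 * Ideal.absNorm (I : Ideal (𝓞 K)) ^ 2 ≤ |discr K| := by
  obtain ⟨I, rfl, hI⟩ := exists_ideal_in_class_of_norm_le C
  have hsqrt : 2 * (Ideal.absNorm (I : Ideal (𝓞 K)) : ℝ) ≤ √|discr K| := by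
    rw [IsTotallyReal.nrComplexPlaces_eq_zero, hdeg] at hI
    simp only [pow_zero, Nat.factorial_two, Nat.cast_ofNat, one_mul] at hI
    linarith
  rw [Real.le_sqrt (by positivity) (by positivity)] at hsqrt
  have hsq : 4 * (Ideal.absNorm (I : Ideal (𝓞 K)) : ℝ) ^ 2 ≤ |(discr K : ℝ)| := by linarith
  exact ⟨I, rfl, by exact_mod_cast hsq⟩

theorem eq_top_of_forall_primesOverMem [IsTotallyReal K] (hdeg : finrank ℚ K = 2)
    {H : Subgroup (ClassGroup (𝓞 K))} {n : ℕ} (hn : |discr K| < 4 * (n + 1) ^ 2)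
    (h : ∀ p : ℕ, p.Prime → p ≤ n → PrimesOverMem H p) : H = ⊤ := by
  refine (Subgroup.eq_top_iff' H).2 fun C ↦ ?_
  obtain ⟨I, rfl, hI⟩ := exists_mk0_eq_and_absNorm_sq_le hdeg C
  have hIn : Ideal.absNorm (I : Ideal (𝓞 K)) ≤ n := by
    have : (Ideal.absNorm (I : Ideal (𝓞 K)) : ℤ) ^ 2 < (n + 1) ^ 2 := by linarith
    exact Nat.lt_succ_iff.1 (by exact_mod_cast lt_of_pow_lt_pow_left₀ 2 (by positivity) this)
  have hI0 : Ideal.absNorm (I : Ideal (𝓞 K)) ≠ 0 := Ideal.absNorm_ne_zero_of_nonZeroDivisors I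
  have hIH : PrimesOverMem H (Ideal.absNorm (I : Ideal (𝓞 K))) := .of_forall_prime hI0
    fun p hp hpI ↦ h p hp ((Nat.le_of_dvd hI0.bot_lt hpI).trans hIn)
  exact hIH.mk0_mem (Ideal.absNorm_mem _)

end RealQuadratic

theorem exists_monoidHom_multiplicative_zmod_prod {C : Type*} [CommGroup C] {n : ℕ} {a b : C}
    (ha : a ^ n = 1) (hb : b ^ n = 1) :
    ∃ f : Multiplicative (ZMod n × ZMod n) →* C,
      ∀ i j : ℕ, f (.ofAdd (i, j)) = a ^ i * b ^ j := by
  have hz {x : C} (hx : x ^ n = 1) : zmultiplesHom (Additive C) (.ofMul x) (n : ℤ) = 0 := by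
    rw [zmultiplesHom_apply, natCast_zsmul, ← ofMul_pow, hx, ofMul_one]
  have hlift {x : C} (hx : x ^ n = 1) (i : ℕ) :
      ZMod.lift n ⟨_, hz hx⟩ (i : ZMod n) = .ofMul (x ^ i) := by
    simpa using ZMod.lift_coe n ⟨_, hz hx⟩ i
  refine ⟨AddMonoidHom.toMultiplicativeLeft
    ((ZMod.lift n ⟨_, hz ha⟩).coprod (ZMod.lift n ⟨_, hz hb⟩)), fun i j ↦ ?_⟩
  simp [hlift ha, hlift hb]

theorem nonempty_mulEquiv_of_closure_pair {C : Type*} [CommGroup C] {n : ℕ} [NeZero n] {a b : C}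
    (ha : a ^ n = 1) (hb : b ^ n = 1) (htop : Subgroup.closure {a, b} = ⊤)
    (hind : ∀ i j : ℕ, a ^ i * b ^ j = 1 → n ∣ i ∧ n ∣ j) :
    Nonempty (C ≃* Multiplicative (ZMod n × ZMod n)) := by
  obtain ⟨f, hf⟩ := exists_monoidHom_multiplicative_zmod_prod ha hb
  have hinj : Function.Injective f := by
    refine (injective_iff_map_eq_one f).2 fun x hx ↦ ?_
    obtain ⟨⟨i, j⟩, rfl⟩ := Multiplicative.ofAdd.surjective x
    rw [← ZMod.natCast_zmod_val i, ← ZMod.natCast_zmod_val j, hf] at hx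
    obtain ⟨hi, hj⟩ := hind _ _ hx
    rw [← ZMod.natCast_eq_zero_iff, ZMod.natCast_zmod_val] at hi hj
    rw [hi, hj, Prod.mk_zero_zero, ofAdd_zero]
  have hsurj : Function.Surjective f := by
    rw [← MonoidHom.range_eq_top, eq_top_iff, ← htop, Subgroup.closure_le]
    rintro x (rfl | rfl)
    · exact ⟨.ofAdd ((1 : ℕ), (0 : ℕ)), by rw [hf, pow_one, pow_zero, mul_one]⟩
    · exact ⟨.ofAdd ((0 : ℕ), (1 : ℕ)), by rw [hf, pow_one, pow_zero, one_mul]⟩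
  exact ⟨(MulEquiv.ofBijective f ⟨hinj, hsurj⟩).symm⟩

theorem coe_sylow_eq_top_of_isPGroup {G : Type*} [Group G] {p : ℕ} (hG : IsPGroup p G)
    (P : Sylow p G) : (P : Subgroup G) = ⊤ :=
  top_le_iff.1 ((hG.to_subgroup ⊤).le_sylow_of_normal P)

theorem nonempty_sylow_mulEquiv_of_isPGroup {G A : Type*} [Group G] [Group A] {p : ℕ}
    (hA : IsPGroup p A) (e : G ≃* A) (P : Sylow p G) : Nonempty ((P : Subgroup G) ≃* A) :=
  have htop := coe_sylow_eq_top_of_isPGroup (hA.of_equiv e.symm) P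
  ⟨((MulEquiv.subgroupCongr htop).trans Subgroup.topEquiv).trans e⟩

section PowerResidue

variable {R F : Type*} [CommRing R] [Field F] [Fintype F] {n p : ℕ}

theorem map_pow_eq_one_of_mem_range_powMonoidHom (hn : Fintype.card F - 1 = p * n) (φ : R →+* F)
    {u : Rˣ} (hu : u ∈ (powMonoidHom p : Rˣ →* Rˣ).range) : φ u ^ n = 1 := by
  obtain ⟨v, rfl⟩ := hu
  rw [powMonoidHom_apply, Units.val_pow_eq_pow_val, map_pow, ← pow_mul, ← hn,
    FiniteField.pow_card_sub_one_eq_one _ (v.isUnit.map φ).ne_zero]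

theorem map_units_pow_eq_one_of_sup_eq_top (hn : Fintype.card F - 1 = p * n) (φ : R →+* F)
    {ε : Rˣ} (htop : Subgroup.zpowers ε ⊔ (powMonoidHom p : Rˣ →* Rˣ).range = ⊤)
    (hε : φ ε ^ n = 1) (u : Rˣ) : φ u ^ n = 1 := by
  let f : Rˣ →* F := (powMonoidHom n).comp ((φ : R →* F).comp (Units.coeHom R))
  suffices hker : f.ker = ⊤ from MonoidHom.mem_ker.1 (hker ▸ Subgroup.mem_top u)
  rw [eq_top_iff, ← htop, sup_le_iff, Subgroup.zpowers_le]
  exact ⟨hε, fun v hv ↦ map_pow_eq_one_of_mem_range_powMonoidHom hn φ hv⟩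

theorem dvd_of_pow_mul_eq_mul_pow (hp : p.Prime) (hn : Fintype.card F - 1 = p * n) (φ : R →+* F)
    {x y u β : R} {i : ℕ} (h : x ^ i * y = u * β ^ p) (hy : φ y ^ n = 1) (hu : φ u ^ n = 1)
    (hx0 : φ x ≠ 0) (hx : φ x ^ n ≠ 1) : p ∣ i := by
  have hpow : (φ x ^ n) ^ i = (φ β ^ n) ^ p := by
    have := congrArg (fun z ↦ φ z ^ n) h
    simp only [map_mul, map_pow, mul_pow, hy, hu, mul_one, one_mul] at this
    rw [pow_right_comm, this, pow_right_comm]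
  have hβ0 : φ β ≠ 0 := by
    rintro h0
    have hn0 : n ≠ 0 := fun hn0 ↦ hx (by rw [hn0, pow_zero])
    rw [h0, zero_pow hn0, zero_pow hp.ne_zero] at hpow
    exact pow_ne_zero i (pow_ne_zero n hx0) hpow
  have hroot {z : F} (hz : z ≠ 0) : (z ^ n) ^ p = 1 := by
    rw [← pow_mul, mul_comm, ← hn, FiniteField.pow_card_sub_one_eq_one z hz]
  have := Fact.mk hp
  rw [← orderOf_eq_prime (hroot hx0) hx, orderOf_dvd_iff_pow_eq_one, hpow, hroot hβ0]

theorem exists_pow_mul_pow_eq_of_mk0 [IsDedekindDomain R] {P Q : (Ideal R)⁰} {γ δ : R}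
    (hP : (P : Ideal R) ^ p = Ideal.span {γ}) (hQ : (Q : Ideal R) ^ p = Ideal.span {δ})
    {i j : ℕ} (h : ClassGroup.mk0 P ^ i * ClassGroup.mk0 Q ^ j = 1) :
    ∃ (u : Rˣ) (β : R), γ ^ i * δ ^ j = u * β ^ p := by
  rw [← map_pow, ← map_pow, ← map_mul, ClassGroup.mk0_eq_one_iff] at h
  obtain ⟨β, hβ⟩ := h
  have hspan : Ideal.span {γ ^ i * δ ^ j} = Ideal.span {β ^ p} := calc
    _ = ((P : Ideal R) ^ p) ^ i * ((Q : Ideal R) ^ p) ^ j := by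
      rw [hP, hQ, Ideal.span_singleton_pow, Ideal.span_singleton_pow,
        Ideal.span_singleton_mul_span_singleton]
    _ = ((P : Ideal R) ^ i * (Q : Ideal R) ^ j) ^ p := by
      rw [mul_pow, pow_right_comm, pow_right_comm (Q : Ideal R)]
    _ = Ideal.span {β ^ p} := by
      rw [← Ideal.span_singleton_pow]
      exact congrArg (· ^ p) hβ
  obtain ⟨u, hu⟩ := (Ideal.span_singleton_eq_span_singleton.1 hspan).symm
  exact ⟨u, β, by rw [← hu, mul_comm]⟩

end PowerResidue

section QuadraticRing

variable {S : Type*} [CommRing S] {a b : ℤ}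

theorem finrank_eq_two_of_algEquiv_quadraticAlgebra (e : QuadraticAlgebra ℤ a b ≃ₐ[ℤ] S) :
    finrank ℤ S = 2 :=
  e.toLinearEquiv.finrank_eq.symm.trans (QuadraticAlgebra.finrank_eq_two a b)

theorem norm_algEquiv_quadraticAlgebra (e : QuadraticAlgebra ℤ a b ≃ₐ[ℤ] S) (x y : ℤ) :
    Algebra.norm ℤ (e ⟨x, y⟩) = x ^ 2 + b * x * y - a * y ^ 2 := by
  rw [Algebra.norm_eq_of_algEquiv, algebraNorm_eq_quadraticAlgebraNorm, QuadraticAlgebra.norm_def]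
  ring

theorem natCast_dvd_im_of_natCast_dvd (e : QuadraticAlgebra ℤ a b ≃ₐ[ℤ] S) {n : ℕ} {x y : ℤ}
    (h : (n : S) ∣ e ⟨x, y⟩) : (n : ℤ) ∣ y := by
  obtain ⟨s, hs⟩ := h
  obtain ⟨z, rfl⟩ := e.surjective s
  refine ⟨z.im, ?_⟩
  have hz : (⟨x, y⟩ : QuadraticAlgebra ℤ a b) = n * z := e.injective (by rw [hs]; simp)
  simpa using congrArg QuadraticAlgebra.im hz

theorem exists_ringHom_of_sq_eq (e : QuadraticAlgebra ℤ a b ≃ₐ[ℤ] S) {F : Type*} [CommRing F]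
    {r : F} (hr : r ^ 2 = a + b * r) :
    ∃ φ : S →+* F, ∀ x y : ℤ, φ (e ⟨x, y⟩) = x + y * r := by
  let f : QuadraticAlgebra ℤ a b →ₐ[ℤ] F := QuadraticAlgebra.lift ⟨r, by simpa [← sq] using hr⟩
  refine ⟨(f.comp e.symm.toAlgHom).toRingHom, fun x y ↦ ?_⟩
  simp [f, QuadraticAlgebra.mk_eq_add_smul_omega]

theorem isEmpty_ringHom_of_forall_sq_ne (e : QuadraticAlgebra ℤ a b ≃ₐ[ℤ] S) {F : Type*}
    [CommRing F] (h : ∀ r : F, r ^ 2 ≠ a + b * r) : IsEmpty (S →+* F) := by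
  refine ⟨fun φ ↦ h (φ (e ω)) ?_⟩
  rw [← map_pow, ← map_pow, sq, QuadraticAlgebra.omega_mul_omega_eq_mk,
    QuadraticAlgebra.mk_eq_add_smul_omega]
  simp

theorem PrimesOverMem.of_natAbs_eq_mul [IsDedekindDomain S] [Module.Free ℤ S] [Module.Finite ℤ S]
    (e : QuadraticAlgebra ℤ a b ≃ₐ[ℤ] S) {H : Subgroup (ClassGroup S)} {m p : ℕ} (hp : p.Prime)
    (hm : PrimesOverMem H m) (x : ℤ) (hx : (x ^ 2 + b * x - a).natAbs = p * m) :
    PrimesOverMem H p := by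
  refine .of_norm_eq_mul (finrank_eq_two_of_algEquiv_quadraticAlgebra e) hp hm (β := e ⟨x, 1⟩) ?_
  rw [norm_algEquiv_quadraticAlgebra, mul_one, one_pow, mul_one, hx]

end QuadraticRing

section QuadraticField

variable {K : Type*} [Field K] [NumberField K] {a b : ℤ}

theorem finrank_rat_eq_two_of_algEquiv_quadraticAlgebra
    (e : QuadraticAlgebra ℤ a b ≃ₐ[ℤ] 𝓞 K) : finrank ℚ K = 2 := by
  rw [← RingOfIntegers.rank, finrank_eq_two_of_algEquiv_quadraticAlgebra e]

theorem isTotallyReal_of_algEquiv_quadraticAlgebra (e : QuadraticAlgebra ℤ a b ≃ₐ[ℤ] 𝓞 K)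
    (hpos : 0 < b ^ 2 + 4 * a) : IsTotallyReal K :=
  isTotallyReal_of_finrank_eq_two_of_discr_pos
    (finrank_rat_eq_two_of_algEquiv_quadraticAlgebra e)
    (hpos.trans_eq (discr_eq_of_algEquiv_quadraticAlgebra e).symm)

end QuadraticField

section Discriminant32009

variable {K : Type*} [Field K] [NumberField K]

theorem primesOverMem_of_prime_le_89 (e : QuadraticAlgebra ℤ 8002 1 ≃ₐ[ℤ] 𝓞 K)
    {H : Subgroup (ClassGroup (𝓞 K))} (h2 : PrimesOverMem H 2) (h5 : PrimesOverMem H 5) {p : ℕ}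
    (hp : p.Prime) (hle : p ≤ 89) : PrimesOverMem H p := by
  -- Each line uses an element `x + ω`, of norm `x ^ 2 + x - 8002`.
  have h13 : PrimesOverMem H 13 := .of_natAbs_eq_mul e (by norm_num) ((h2.pow 3).mul h5) (-87) rfl
  have h17 : PrimesOverMem H 17 := .of_natAbs_eq_mul e (by norm_num) (h2.mul h5) (-89) rfl
  have h23 : PrimesOverMem H 23 := .of_natAbs_eq_mul e (by norm_num) ((h2.pow 2).mul h13) (-83) rfl
  have h29 : PrimesOverMem H 29 := .of_natAbs_eq_mul e (by norm_num) (h2.pow 5) (-95) rfl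
  have h37 : PrimesOverMem H 37 := .of_natAbs_eq_mul e (by norm_num) (h2.mul h5) (-92) rfl
  have h43 : PrimesOverMem H 43 := .of_natAbs_eq_mul e (by norm_num) (h2.mul h13) (-96) rfl
  have h47 : PrimesOverMem H 47 := .of_natAbs_eq_mul e (by norm_num) (h2.pow 2) (-91) rfl
  have h61 : PrimesOverMem H 61 := .of_natAbs_eq_mul e (by norm_num) ((h2.pow 2).mul h13) (-70) rfl
  have h73 : PrimesOverMem H 73 := .of_natAbs_eq_mul e (by norm_num) (h2.mul h13) (-100) rfl
  have inert (hroot : ∀ r : ZMod p, r ^ 2 ≠ (8002 : ℤ) + (1 : ℤ) * r) : PrimesOverMem H p :=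
    .of_isEmpty_ringHom (finrank_eq_two_of_algEquiv_quadraticAlgebra e) hp
      (isEmpty_ringHom_of_forall_sq_ne e hroot)
  -- The remaining primes are inert: `X ^ 2 - X - 8002` has no root modulo `p`.
  interval_cases p <;> first | assumption | (norm_num at hp; done) | exact inert (by decide)

theorem eq_top_of_primesOverMem_two_five (e : QuadraticAlgebra ℤ 8002 1 ≃ₐ[ℤ] 𝓞 K)
    {H : Subgroup (ClassGroup (𝓞 K))} (h2 : PrimesOverMem H 2) (h5 : PrimesOverMem H 5) : H = ⊤ :=
  have := isTotallyReal_of_algEquiv_quadraticAlgebra e (by norm_num)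
  eq_top_of_forall_primesOverMem (n := 89) (finrank_rat_eq_two_of_algEquiv_quadraticAlgebra e)
    (by rw [discr_eq_of_algEquiv_quadraticAlgebra e]; norm_num)
    fun _ hp hle ↦ primesOverMem_of_prime_le_89 e h2 h5 hp hle

theorem exists_zpowers_sup_range_powMonoidHom_three_eq_top
    (e : QuadraticAlgebra ℤ 8002 1 ≃ₐ[ℤ] 𝓞 K) :
    ∃ ε : (𝓞 K)ˣ, (ε : 𝓞 K) = e ⟨18917767, 212666⟩ ∧
      Subgroup.zpowers ε ⊔ (powMonoidHom 3 : (𝓞 K)ˣ →* _).range = ⊤ := by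
  have := isTotallyReal_of_algEquiv_quadraticAlgebra e (by norm_num)
  have hmul : (⟨18917767, 212666⟩ * ⟨-19130433, 212666⟩ : QuadraticAlgebra ℤ 8002 1) = 1 := by
    ext <;> simp
  obtain ⟨ε, hε⟩ := (IsUnit.of_mul_eq_one _ hmul).map e
  refine ⟨ε, hε, zpowers_sup_range_powMonoidHom_units_eq_top
    (finrank_rat_eq_two_of_algEquiv_quadraticAlgebra e) Nat.prime_three (by decide) ?_⟩
  have hroot : (5 : ZMod 13) ^ 2 = (8002 : ℤ) + (1 : ℤ) * 5 := by decide
  have hpow : ((18917767 : ℤ) + (212666 : ℤ) * 5 : ZMod 13) ^ 4 ≠ 1 := by decide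
  have := Fact.mk (show Nat.Prime 13 by norm_num)
  obtain ⟨φ, hφ⟩ := exists_ringHom_of_sq_eq e hroot
  intro hmem
  apply hpow
  rw [← hφ, ← hε]
  exact map_pow_eq_one_of_mem_range_powMonoidHom (by simp) φ hmem

theorem three_dvd_of_pow_mul_pow_eq (e : QuadraticAlgebra ℤ 8002 1 ≃ₐ[ℤ] 𝓞 K) {ℓ n : ℕ}
    (hℓ : ℓ.Prime) (hn : ℓ - 1 = 3 * n) (r : ZMod ℓ) (hr : r ^ 2 = (8002 : ℤ) + (1 : ℤ) * r)
    (hε : ((18917767 : ℤ) + (212666 : ℤ) * r) ^ n = 1) {x x' y y' : ℤ}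
    (hy : (y + y' * r) ^ n = 1) (hx0 : x + x' * r ≠ 0) (hx : (x + x' * r) ^ n ≠ 1) {i j : ℕ}
    {u : (𝓞 K)ˣ} {β : 𝓞 K} (h : e ⟨x, x'⟩ ^ i * e ⟨y, y'⟩ ^ j = u * β ^ 3) : 3 ∣ i := by
  have := Fact.mk hℓ
  obtain ⟨ε, hε', htop⟩ := exists_zpowers_sup_range_powMonoidHom_three_eq_top e
  obtain ⟨φ, hφ⟩ := exists_ringHom_of_sq_eq e hr
  rw [← ZMod.card ℓ] at hn
  rw [← hφ] at hε hy hx0 hx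
  rw [← hε'] at hε
  exact dvd_of_pow_mul_eq_mul_pow Nat.prime_three hn φ h
    (by rw [map_pow, pow_right_comm, hy, one_pow])
    (map_units_pow_eq_one_of_sup_eq_top hn φ htop hε u) hx0 hx

set_option maxRecDepth 4000 in
theorem dvd_and_dvd_of_mk0_pow_mul_mk0_pow_eq_one
    (e : QuadraticAlgebra ℤ 8002 1 ≃ₐ[ℤ] 𝓞 K) {P Q : (Ideal (𝓞 K))⁰}
    (hP : (P : Ideal (𝓞 K)) ^ 3 = Ideal.span {e ⟨89, 1⟩})
    (hQ : (Q : Ideal (𝓞 K)) ^ 3 = Ideal.span {e ⟨21883, 246⟩}) {i j : ℕ}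
    (h : ClassGroup.mk0 P ^ i * ClassGroup.mk0 Q ^ j = 1) : 3 ∣ i ∧ 3 ∣ j := by
  obtain ⟨u, β, hβ⟩ := exists_pow_mul_pow_eq_of_mk0 hP hQ h
  have hβ' := (mul_comm (e ⟨21883, 246⟩ ^ j) _).trans hβ
  exact ⟨three_dvd_of_pow_mul_pow_eq e (ℓ := 103) (n := 34) (by norm_num) rfl 20
      (hr := by decide) (hε := by decide) (hy := by decide) (hx0 := by decide)
      (hx := by decide) hβ,
    three_dvd_of_pow_mul_pow_eq e (ℓ := 601) (n := 200) (by norm_num) rfl 142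
      (hr := by decide) (hε := by decide) (hy := by decide) (hx0 := by decide)
      (hx := by decide) hβ'⟩

theorem nonempty_classGroup_mulEquiv_zmod_three_prod_zmod_three
    (e : QuadraticAlgebra ℤ 8002 1 ≃ₐ[ℤ] 𝓞 K) :
    Nonempty (ClassGroup (𝓞 K) ≃* Multiplicative (ZMod 3 × ZMod 3)) := by
  have hrank := finrank_eq_two_of_algEquiv_quadraticAlgebra e
  have p5 : Nat.Prime 5 := by norm_num
  obtain ⟨P, hP, h2P, hP3⟩ := exists_pow_eq_span_of_norm_eq_prime_pow hrank Nat.prime_two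
    (γ := e ⟨89, 1⟩) three_ne_zero (by rw [norm_algEquiv_quadraticAlgebra]; rfl)
    (fun h ↦ absurd (natCast_dvd_im_of_natCast_dvd e h) (by decide))
  obtain ⟨Q, hQ, h5Q, hQ3⟩ := exists_pow_eq_span_of_norm_eq_prime_pow hrank p5
    (γ := e ⟨21883, 246⟩) three_ne_zero (by rw [norm_algEquiv_quadraticAlgebra]; rfl)
    (fun h ↦ absurd (natCast_dvd_im_of_natCast_dvd e h) (by decide))
  refine nonempty_mulEquiv_of_closure_pair (mk0_pow_eq_one_of_pow_eq_span hP3)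
    (mk0_pow_eq_one_of_pow_eq_span hQ3) ?_
    fun _ _ ↦ dvd_and_dvd_of_mk0_pow_mul_mk0_pow_eq_one e hP3 hQ3
  exact eq_top_of_primesOverMem_two_five e
    (.of_mk0_mem hrank Nat.prime_two hP h2P (Subgroup.subset_closure (by simp)))
    (.of_mk0_mem hrank p5 hQ h5Q (Subgroup.subset_closure (by simp)))

end Discriminant32009

theorem three_class_group_of_Q_sqrt_32009_general (K : Type*) [Field K] [NumberField K]
    (hdeg : finrank ℚ K = 2) (α : K) (hα : α ^ 2 = 32009) :
    Nonempty (ClassGroup (𝓞 K) ≃* Multiplicative (ZMod 3 × ZMod 3)) := by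
  have hprime : Prime (1 + 4 * 8002 : ℤ) := Nat.prime_iff_prime_int.1 (by norm_num)
  obtain ⟨e⟩ := nonempty_algEquiv_ringOfIntegers hdeg hprime.squarefree hprime.not_isSquare
    (α := α) (by rw [hα]; norm_num)
  exact nonempty_classGroup_mulEquiv_zmod_three_prod_zmod_three e

theorem three_class_group_of_Q_sqrt_32009 (K : Type*) [Field K]
    [NumberField K] (hdeg : Module.finrank ℚ K = 2)
    (α : K) (hα : α ^ 2 = 32009)
    (P : Sylow 3 (ClassGroup (𝓞 K))) :
    Nonempty (↥(P : Subgroup (ClassGroup (𝓞 K))) ≃*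
      Multiplicative (ZMod 3 × ZMod 3)) := by
  obtain ⟨e⟩ := three_class_group_of_Q_sqrt_32009_general K hdeg α hα
  exact nonempty_sylow_mulEquiv_of_isPGroup (.of_card (n := 2) (by simp [sq])) e P
end
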